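/- arXiv:2102.11226 — 2 statements merged into one kernel-verified Lean document; each statement's English description precedes it below -/
import Mathlib

section
/- Let X be a strictly convex normed plane. A Jordan curve C ⊂ X encloses a convex region if and only if for every three collinear points z¹, z², z³ ∈ C with z² between z¹ and z³, the segment [z¹, z³] is contained in C. Consequently, if C_X encloses a convex region, τ : C_X → C_Y is an isometry onto a Jordan curve C_Y in a strictly convex normed plane Y, then C_Y also encloses a convex region. -/
/-- A Jordan curve in a normed plane: the range of a continuous, `1`-periodic map that
is injective on a fundamental domain. -/
def IsJordanCurve {X : Type*} [NormedAddCommGroup X] [NormedSpace ℝ X]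
    (C : Set X) : Prop :=
  ∃ f : ℝ → X, Continuous f ∧ Function.Periodic f 1 ∧
    Set.InjOn f (Set.Ico (0:ℝ) 1) ∧ Set.range f = C

/-- A Jordan curve encloses a convex region when it is the frontier of a compact convex
body with nonempty interior. -/
def EnclosesConvex {X : Type*} [NormedAddCommGroup X] [NormedSpace ℝ X]
    (C : Set X) : Prop :=
  ∃ K : Set X, IsCompact K ∧ Convex ℝ K ∧ (interior K).Nonempty ∧ C = frontier K

open Set Filter Topology

/-- The circle does not embed continuously in the real line. -/
theorem Function.Periodic.not_injOn_Ico_of_continuous {g : ℝ → ℝ} (hg : Continuous g)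
    (hper : Function.Periodic g 1) : ¬ InjOn g (Ico 0 1) := by
  intro hinj
  have h1 : g 1 = g 0 := by simpa using hper 0
  have hne : g 0 ≠ g (1 / 2) := fun h ↦ by
    have := hinj (by norm_num) (by norm_num) h
    norm_num at this
  have hm : ∀ x y : ℝ, (x + y) / 2 ∈ uIcc x y := fun x y ↦ by
    rw [mem_uIcc]
    rcases le_total x y with h | h
    · left; constructor <;> linarith
    · right; constructor <;> linarith
  obtain ⟨s, hs, hgs⟩ := intermediate_value_uIcc (a := 0) (b := 1 / 2) hg.continuousOn (hm _ _)
  obtain ⟨t, ht, hgt⟩ := intermediate_value_uIcc (a := 1 / 2) (b := 1) hg.continuousOn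
    (by rw [h1, uIcc_comm]; exact hm _ _)
  rw [uIcc_of_le (by norm_num)] at hs ht
  have hs' : s ≠ 1 / 2 := by
    rintro rfl
    exact hne (by linarith)
  have ht' : t ≠ 1 := by
    rintro rfl
    exact hne (by linarith)
  have hst := hinj ⟨hs.1, by linarith [hs.2]⟩ ⟨by linarith [ht.1], lt_of_le_of_ne ht.2 ht'⟩
    (hgs.trans hgt.symm)
  exact hs' (le_antisymm hs.2 (hst ▸ ht.1))

/-- A Jordan curve can be parametrized starting at any of its points. -/
theorem IsJordanCurve.exists_param {X : Type*} [NormedAddCommGroup X] [NormedSpace ℝ X]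
    {C : Set X} (hC : IsJordanCurve C) {p : X} (hp : p ∈ C) :
    ∃ f : ℝ → X, Continuous f ∧ Function.Periodic f 1 ∧ InjOn f (Ico 0 1) ∧ range f = C ∧
      f 0 = p := by
  obtain ⟨f, hf, hper, hinj, rfl⟩ := hC
  obtain ⟨a, rfl⟩ := hp
  refine ⟨fun t ↦ f (t + a), by fun_prop, fun t ↦ ?_, fun s hs t ht hst ↦ ?_, ?_, by simp⟩
  · change f (t + 1 + a) = f (t + a)
    rw [show t + 1 + a = t + a + 1 by ring, hper]
  · have hfr : ∀ x, f (Int.fract x) = f x := fun x ↦ by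
      have := hper.sub_int_mul_eq (x := x) ⌊x⌋
      rwa [mul_one, Int.self_sub_floor] at this
    have h := hinj ⟨Int.fract_nonneg (s + a), Int.fract_lt_one _⟩
      ⟨Int.fract_nonneg (t + a), Int.fract_lt_one _⟩ (by rw [hfr, hfr]; exact hst)
    obtain ⟨z, hz⟩ := Int.fract_eq_fract.1 h
    have h1 : (z : ℝ) < 1 := by linarith [hs.2, ht.1]
    have h2 : (-1 : ℝ) < z := by linarith [hs.1, ht.2]
    have : z = 0 := by
      have h1' : z < 1 := by exact_mod_cast h1
      have h2' : -1 < z := by exact_mod_cast h2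
      omega
    subst this
    simp only [Int.cast_zero] at hz
    linarith
  · ext x
    constructor
    · rintro ⟨t, rfl⟩; exact ⟨_, rfl⟩
    · rintro ⟨t, rfl⟩; exact ⟨t - a, by simp⟩

theorem IsPreconnected.Ioo_inter_preimage {X : Type*} [TopologicalSpace X] [T2Space X]
    {f : ℝ → X} (hf : Continuous f) (hinj : InjOn f (Ico 0 1)) (h01 : f 1 = f 0)
    {σ : Set X} (hσ : IsPreconnected σ) (hsub : σ ⊆ range f) (hper : Function.Periodic f 1)
    (h0 : f 0 ∉ σ) : IsPreconnected (Ioo 0 1 ∩ f ⁻¹' σ) := by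
  have hmem : ∀ t ∈ Icc (0 : ℝ) 1, f t ∈ σ → t ∈ Ioo (0 : ℝ) 1 := by
    intro t ht hts
    refine ⟨lt_of_le_of_ne ht.1 ?_, lt_of_le_of_ne ht.2 ?_⟩
    · rintro rfl; exact h0 hts
    · rintro rfl; exact h0 (h01 ▸ hts)
  have hcl : ∀ F : Set ℝ, IsClosed F → IsClosed (f '' (F ∩ Icc 0 1)) := fun F hF ↦
    ((isCompact_Icc.inter_left hF).image hf).isClosed
  rw [isPreconnected_closed_iff] at hσ ⊢
  intro F G hF hG hFG hneF hneG
  obtain ⟨s, ⟨hs, hsσ⟩, hsF⟩ := hneF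
  obtain ⟨t, ⟨ht, htσ⟩, htG⟩ := hneG
  obtain ⟨y, hyσ, ⟨a, ⟨haF, ha⟩, rfl⟩, ⟨b, ⟨hbG, hb⟩, hab⟩⟩ :=
    hσ _ _ (hcl F hF) (hcl G hG) (fun x hx ↦ by
      obtain ⟨r, rfl⟩ := hsub hx
      obtain ⟨u, hu, hru⟩ := hper.exists_mem_Ico₀ one_pos r
      rw [hru] at hx ⊢
      have huI : u ∈ Icc (0 : ℝ) 1 := ⟨hu.1, hu.2.le⟩
      rcases hFG ⟨hmem u huI hx, hx⟩ with h | h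
      · exact .inl ⟨u, ⟨h, huI⟩, rfl⟩
      · exact .inr ⟨u, ⟨h, huI⟩, rfl⟩)
      ⟨f s, hsσ, s, ⟨hsF, hs.1.le, hs.2.le⟩, rfl⟩ ⟨f t, htσ, t, ⟨htG, ht.1.le, ht.2.le⟩, rfl⟩
  have haI := hmem a ha hyσ
  have hbI := hmem b hb (hab ▸ hyσ)
  have := hinj ⟨hbI.1.le, hbI.2⟩ ⟨haI.1.le, haI.2⟩ hab
  subst this
  exact ⟨b, ⟨haI, hyσ⟩, haF, hbG⟩

/-- A preconnected piece of a Jordan curve accumulating at, but missing, the base point contains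
one of the two ends of the curve. -/
theorem exists_end_subset_preimage {X : Type*} [TopologicalSpace X] [T2Space X]
    {f : ℝ → X} (hf : Continuous f) (hinj : InjOn f (Ico 0 1)) (hper : Function.Periodic f 1)
    {σ : Set X} (hσ : IsPreconnected σ) (hsub : σ ⊆ range f)
    (h0 : f 0 ∉ σ) (hcl : f 0 ∈ closure σ) :
    (∃ a ∈ Ioo (0 : ℝ) 1, ∀ t ∈ Ioc 0 a, f t ∈ σ) ∨
      (∃ a ∈ Ioo (0 : ℝ) 1, ∀ t ∈ Ico a 1, f t ∈ σ) := by
  have h01 : f 1 = f 0 := by simpa using hper 0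
  have hord := (hσ.Ioo_inter_preimage hf hinj h01 hsub hper h0).ordConnected
  set T := Ioo 0 1 ∩ f ⁻¹' σ with hT
  have hσT : σ ⊆ f '' T := fun x hx ↦ by
    obtain ⟨r, rfl⟩ := hsub hx
    obtain ⟨u, hu, hru⟩ := hper.exists_mem_Ico₀ one_pos r
    rw [hru] at hx ⊢
    refine ⟨u, ⟨⟨lt_of_le_of_ne hu.1 ?_, hu.2⟩, hx⟩, rfl⟩
    rintro rfl
    exact h0 hx
  obtain ⟨-, c, hcT, -⟩ : (f '' T).Nonempty := (closure_nonempty_iff.1 ⟨_, hcl⟩).mono hσT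
  by_contra! ⟨hl, hr⟩
  obtain ⟨x, hx, hxσ⟩ := hl c hcT.1
  obtain ⟨y, hy, hyσ⟩ := hr c hcT.1
  have hTI : T ⊆ Icc x y := fun t ht ↦ by
    constructor
    · by_contra! h
      exact hxσ (hord.out ht hcT ⟨h.le, hx.2⟩).2
    · by_contra! h
      exact hyσ (hord.out hcT ht ⟨hy.1, h.le⟩).2
  have hcI : IsClosed (f '' Icc x y) := (isCompact_Icc.image hf).isClosed
  obtain ⟨t, ht, h⟩ := closure_minimal (hσT.trans (image_mono hTI)) hcI hcl
  have ht0 : 0 < t := hx.1.trans_le ht.1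
  have := hinj ⟨ht0.le, ht.2.trans_lt hy.2⟩ (by norm_num) h
  exact ht0.ne' this

/-- A Jordan curve does not contain three segments issuing from a common point in distinct
directions. -/
theorem IsJordanCurve.not_three_segments {X : Type*} [NormedAddCommGroup X] [NormedSpace ℝ X]
    {C : Set X} (hC : IsJordanCurve C) {p a b c : X}
    (ha : segment ℝ p (p + a) ⊆ C) (hb : segment ℝ p (p + b) ⊆ C) (hc : segment ℝ p (p + c) ⊆ C)
    (ha0 : a ≠ 0) (hb0 : b ≠ 0) (hc0 : c ≠ 0)
    (hab : ∀ x y : ℝ, 0 < x → 0 < y → x • a ≠ y • b)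
    (hac : ∀ x y : ℝ, 0 < x → 0 < y → x • a ≠ y • c)
    (hbc : ∀ x y : ℝ, 0 < x → 0 < y → x • b ≠ y • c) : False := by
  obtain ⟨f, hf, hper, hinj, hrange, hf0⟩ := hC.exists_param (ha (left_mem_segment ℝ p _))
  let σ : X → Set X := fun v ↦ (fun t : ℝ ↦ p + t • v) '' Ioc 0 1
  have key : ∀ v : X, v ≠ 0 → segment ℝ p (p + v) ⊆ C →
      (∃ a ∈ Ioo (0 : ℝ) 1, ∀ t ∈ Ioc 0 a, f t ∈ σ v) ∨
      (∃ a ∈ Ioo (0 : ℝ) 1, ∀ t ∈ Ico a 1, f t ∈ σ v) := by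
    intro v hv hs
    have hcont : Continuous fun t : ℝ ↦ p + t • v := by fun_prop
    refine exists_end_subset_preimage hf hinj hper
      (isPreconnected_Ioc.image _ hcont.continuousOn) ?_ ?_ ?_
    · rintro _ ⟨t, ht, rfl⟩
      rw [hrange]
      apply hs
      rw [segment_eq_image']
      exact ⟨t, ⟨ht.1.le, ht.2⟩, by simp⟩
    · rintro ⟨t, ht, h⟩
      rw [hf0] at h
      simp [hv, ht.1.ne'] at h
    · have h0 : (0 : ℝ) ∈ closure (Ioc 0 1) := by
        rw [closure_Ioc (by norm_num)]; norm_num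
      have := image_closure_subset_closure_image hcont ⟨0, h0, rfl⟩
      simpa [hf0] using this
  have dis : ∀ v w : X, (∀ x y : ℝ, 0 < x → 0 < y → x • v ≠ y • w) →
      ∀ t, f t ∈ σ v → f t ∈ σ w → False := by
    rintro v w h t ⟨x, hx, hxt⟩ ⟨y, hy, hyt⟩
    exact h x y hx.1 hy.1 (add_left_cancel (hxt.trans hyt.symm))
  have left : ∀ v w : X, (∀ x y : ℝ, 0 < x → 0 < y → x • v ≠ y • w) →
      (∃ a ∈ Ioo (0 : ℝ) 1, ∀ t ∈ Ioc 0 a, f t ∈ σ v) →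
      (∃ a ∈ Ioo (0 : ℝ) 1, ∀ t ∈ Ioc 0 a, f t ∈ σ w) → False := by
    rintro v w h ⟨x, hx, hxσ⟩ ⟨y, hy, hyσ⟩
    exact dis v w h (min x y) (hxσ _ ⟨lt_min hx.1 hy.1, min_le_left _ _⟩)
      (hyσ _ ⟨lt_min hx.1 hy.1, min_le_right _ _⟩)
  have right : ∀ v w : X, (∀ x y : ℝ, 0 < x → 0 < y → x • v ≠ y • w) →
      (∃ a ∈ Ioo (0 : ℝ) 1, ∀ t ∈ Ico a 1, f t ∈ σ v) →
      (∃ a ∈ Ioo (0 : ℝ) 1, ∀ t ∈ Ico a 1, f t ∈ σ w) → False := by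
    rintro v w h ⟨x, hx, hxσ⟩ ⟨y, hy, hyσ⟩
    exact dis v w h (max x y) (hxσ _ ⟨le_max_left _ _, max_lt hx.2 hy.2⟩)
      (hyσ _ ⟨le_max_right _ _, max_lt hx.2 hy.2⟩)
  rcases key a ha0 ha with h1 | h1 <;> rcases key b hb0 hb with h2 | h2 <;>
    rcases key c hc0 hc with h3 | h3
  · exact left _ _ hab h1 h2
  · exact left _ _ hab h1 h2
  · exact left _ _ hac h1 h3
  · exact right _ _ hbc h2 h3
  · exact left _ _ hbc h2 h3
  · exact right _ _ hac h1 h3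
  · exact right _ _ hab h1 h2
  · exact right _ _ hab h1 h2

theorem Complex.exists_pos_mul_cos_add_sin {z : ℂ} (hz : z ≠ 0) {θ : ℝ} (h : z.arg = θ) :
    ∃ r : ℝ, 0 < r ∧ z = r * (Real.cos θ + Real.sin θ * Complex.I) := by
  refine ⟨‖z‖, norm_pos_iff.2 hz, ?_⟩
  conv_lhs => rw [← Complex.norm_mul_exp_arg_mul_I z, h, Complex.exp_mul_I]
  push_cast
  rfl

/-- A connected set of nonzero vectors of the plane contained in no closed half-plane contains two
pairs of opposite vectors, in independent directions. -/
theorem IsPreconnected.exists_two_opposite_pairs {S : Set ℂ} (hS : IsPreconnected S)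
    (h0 : (0 : ℂ) ∉ S) (hhalf : ∀ w : ℂ, w ≠ 0 → ∃ s ∈ S, (s * w).re < 0) :
    ∃ a ∈ S, ∃ b ∈ S, ∃ c d : ℝ, 0 < c ∧ 0 < d ∧ -(c : ℂ) * a ∈ S ∧ -(d : ℂ) * b ∈ S ∧
      (b / a).im ≠ 0 := by
  have hne : ∀ s ∈ S, s ≠ 0 := fun s hs h ↦ h0 (h ▸ hs)
  by_cases hA : ∀ s ∈ S, ∃ c : ℝ, 0 < c ∧ -(c : ℂ) * s ∈ S
  · obtain ⟨s, hs, -⟩ := hhalf 1 one_ne_zero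
    obtain ⟨t, ht, hst⟩ := hhalf (-Complex.I / s)
      (div_ne_zero (neg_ne_zero.2 Complex.I_ne_zero) (hne s hs))
    obtain ⟨c, hc, hcs⟩ := hA s hs
    obtain ⟨d, hd, hdt⟩ := hA t ht
    refine ⟨s, hs, t, ht, c, d, hc, hd, hcs, hdt, ?_⟩
    rw [show t * (-Complex.I / s) = -Complex.I * (t / s) by ring] at hst
    simp at hst
    exact hst.ne
  push Not at hA
  obtain ⟨s₀, hs₀, hmiss⟩ := hA
  have hs₀' := hne s₀ hs₀
  have hslit : ∀ s ∈ S, s / s₀ ∈ Complex.slitPlane := by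
    intro s hs
    by_contra h
    rw [Complex.mem_slitPlane_iff, not_or] at h
    push Not at h
    have hz : s / s₀ = ((s / s₀).re : ℂ) := Complex.ext rfl (by simpa using h.2)
    have hne' : (s / s₀).re ≠ 0 := fun h' ↦ by
      rw [h', Complex.ofReal_zero, div_eq_zero_iff] at hz
      exact hz.elim (hne s hs) hs₀'
    refine hmiss (-(s / s₀).re) (neg_pos.2 (lt_of_le_of_ne h.1 hne')) ?_
    rw [Complex.ofReal_neg, neg_neg, ← hz, div_mul_cancel₀ _ hs₀']
    exact hs
  set I := (fun s ↦ (s / s₀).arg) '' S with hI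
  have hIord : I.OrdConnected := by
    refine (hS.image _ fun s hs ↦ ?_).ordConnected
    exact ((Complex.continuousAt_arg (hslit s hs)).comp
      (f := fun s : ℂ ↦ s / s₀) (by fun_prop)).continuousWithinAt
  have hIπ : ∀ θ ∈ I, -Real.pi < θ ∧ θ < Real.pi := by
    rintro _ ⟨s, hs, rfl⟩
    exact ⟨Complex.neg_pi_lt_arg _, lt_of_le_of_ne (Complex.arg_le_pi _)
      (Complex.mem_slitPlane_iff_arg.1 (hslit s hs)).1⟩
  obtain ⟨α, hα, β, hβ, hαβ⟩ : ∃ α ∈ I, ∃ β ∈ I, Real.pi < β - α := by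
    by_contra! hcon
    have hIne : I.Nonempty := ⟨_, s₀, hs₀, rfl⟩
    have hbb : BddBelow I := ⟨-Real.pi, fun θ hθ ↦ (hIπ θ hθ).1.le⟩
    have hba : BddAbove I := ⟨Real.pi, fun θ hθ ↦ (hIπ θ hθ).2.le⟩
    have hlen : sSup I ≤ sInf I + Real.pi := by
      refine csSup_le hIne fun β hβ ↦ ?_
      have : β - Real.pi ≤ sInf I := le_csInf hIne fun α hα ↦ by linarith [hcon α hα β hβ]
      linarith
    set m := (sInf I + sSup I) / 2 with hm
    have hw : (Real.cos m - Real.sin m * Complex.I : ℂ) ≠ 0 := by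
      have := Complex.exp_ne_zero (-(m * Complex.I))
      rwa [← neg_mul, Complex.exp_mul_I, Complex.cos_neg, Complex.sin_neg, neg_mul,
        ← sub_eq_add_neg, ← Complex.ofReal_cos, ← Complex.ofReal_sin] at this
    obtain ⟨s, hs, hneg⟩ := hhalf ((Real.cos m - Real.sin m * Complex.I) / s₀)
      (div_ne_zero hw hs₀')
    have hθ : (s / s₀).arg ∈ I := ⟨s, hs, rfl⟩
    set θ := (s / s₀).arg with hθdef
    obtain ⟨r, hr, e⟩ := Complex.exists_pos_mul_cos_add_sin (div_ne_zero (hne s hs) hs₀')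
      hθdef.symm
    have hre : (s * ((Real.cos m - Real.sin m * Complex.I) / s₀)).re
        = r * Real.cos (θ - m) := by
      rw [show s * ((Real.cos m - Real.sin m * Complex.I) / s₀)
        = (s / s₀) * (Real.cos m - Real.sin m * Complex.I) by ring, e, Real.cos_sub]
      simp [-Complex.ofReal_cos, -Complex.ofReal_sin]
      ring
    rw [hre] at hneg
    have h1 := csInf_le hbb hθ
    have h2 := le_csSup hba hθ
    have := Real.cos_nonneg_of_mem_Icc (x := θ - m) ⟨by linarith, by linarith⟩
    exact absurd hneg (not_lt.2 (by positivity))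
  have hα' := hIπ α hα
  have hβ' := hIπ β hβ
  set ε := (β - α - Real.pi) / 2 with hε
  have hmemI : ∀ θ, α ≤ θ → θ ≤ β → θ ∈ I := fun θ h1 h2 ↦ hIord.out hα hβ ⟨h1, h2⟩
  have hopp : ∀ θ, ∀ s ∈ S, ∀ t ∈ S, (s / s₀).arg = θ → (t / s₀).arg = θ + Real.pi →
      ∃ c : ℝ, 0 < c ∧ -(c : ℂ) * s = t := by
    intro θ s hs t ht h1 h2
    obtain ⟨r₁, p1, e1⟩ := Complex.exists_pos_mul_cos_add_sin (div_ne_zero (hne s hs) hs₀') h1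
    obtain ⟨r₂, p2, e2⟩ := Complex.exists_pos_mul_cos_add_sin (div_ne_zero (hne t ht) hs₀') h2
    refine ⟨r₂ / r₁, div_pos p2 p1, ?_⟩
    rw [Real.cos_add_pi, Real.sin_add_pi] at e2
    have p1' : (r₁ : ℂ) ≠ 0 := by exact_mod_cast p1.ne'
    apply (div_left_inj' hs₀').1
    rw [mul_div_assoc, e2, e1]
    push_cast
    field_simp
    ring
  obtain ⟨a, ha, haθ⟩ := hmemI α le_rfl (by linarith [Real.pi_pos])
  obtain ⟨a', ha', haθ'⟩ := hmemI (α + Real.pi) (by linarith [Real.pi_pos]) (by linarith)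
  obtain ⟨b, hb, hbθ⟩ := hmemI (α + ε) (by linarith) (by linarith [Real.pi_pos])
  obtain ⟨b', hb', hbθ'⟩ := hmemI (α + ε + Real.pi) (by linarith [Real.pi_pos]) (by linarith)
  obtain ⟨c, hc, rfl⟩ := hopp _ a ha a' ha' haθ haθ'
  obtain ⟨d, hd, rfl⟩ := hopp _ b hb b' hb' hbθ hbθ'
  refine ⟨a, ha, b, hb, c, d, hc, hd, ha', hb', fun him ↦ ?_⟩
  have hre : b = ((b / a).re : ℂ) * a := by
    rw [show ((b / a).re : ℂ) = b / a from Complex.ext rfl (by simpa using him.symm),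
      div_mul_cancel₀ _ (hne a ha)]
  have hb2 : b / s₀ = ((b / a).re : ℂ) * (a / s₀) := by
    rw [← mul_div_assoc, ← hre]
  obtain ⟨r₁, p1, e1⟩ := Complex.exists_pos_mul_cos_add_sin (div_ne_zero (hne a ha) hs₀') haθ
  obtain ⟨r₂, p2, e2⟩ := Complex.exists_pos_mul_cos_add_sin (div_ne_zero (hne b hb) hs₀') hbθ
  have hx := congrArg Complex.re (e2.symm.trans (hb2.trans (congrArg _ e1)))
  have hy := congrArg Complex.im (e2.symm.trans (hb2.trans (congrArg _ e1)))
  simp [-Complex.ofReal_cos, -Complex.ofReal_sin] at hx hy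
  have hsin : 0 < Real.sin ε := Real.sin_pos_of_pos_of_lt_pi (by linarith) (by linarith)
  have : r₂ * Real.sin ε = 0 := by
    rw [show ε = (α + ε) - α by ring, Real.sin_sub]
    linear_combination Real.cos α * hy - Real.sin α * hx
  exact absurd this (by positivity)

/-- Two frontier points of a convex set on a common ray from an interior point coincide. -/
theorem Convex.eq_of_mem_frontier_of_ray {E : Type*} [NormedAddCommGroup E] [NormedSpace ℝ E]
    {K : Set E} (hK : Convex ℝ K) (hcl : IsClosed K) {c v : E} (hc : c ∈ interior K) {x y : ℝ}
    (hx : 0 < x) (hy : 0 < y) (hxK : c + x • v ∈ frontier K) (hyK : c + y • v ∈ frontier K) :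
    x = y := by
  have aux : ∀ {x y : ℝ}, 0 < x → x < y → c + x • v ∈ frontier K → c + y • v ∈ frontier K →
      False := by
    intro x y hx hxy hxK hyK
    rw [hcl.frontier_eq] at hxK hyK
    apply hxK.2
    refine hK.openSegment_interior_self_subset_interior hc hyK.1 ?_
    have hy := hx.trans hxy
    rw [openSegment_eq_image']
    refine ⟨x / y, ⟨div_pos hx hy, (div_lt_one hy).2 hxy⟩, ?_⟩
    simp [smul_smul, div_mul_cancel₀ _ hy.ne']
  rcases lt_trichotomy x y with h | h | h
  · exact (aux hx h hxK hyK).elim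
  · exact h
  · exact (aux hy h hyK hxK).elim

/-- A Jordan curve inside the frontier of a planar convex body is the whole frontier. -/
theorem IsJordanCurve.eq_frontier {C K : Set ℂ} (hC : IsJordanCurve C) (hK : Convex ℝ K)
    (hcl : IsClosed K) (hint : (interior K).Nonempty) (hsub : C ⊆ frontier K) :
    C = frontier K := by
  refine hsub.antisymm fun q hq ↦ ?_
  by_contra hqC
  obtain ⟨c, hc⟩ := hint
  have hne : ∀ x ∈ frontier K, x - c ≠ 0 := fun x hx h ↦ by
    rw [sub_eq_zero.1 h, hcl.frontier_eq] at hx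
    exact hx.2 hc
  have hq0 := hne q hq
  have hray : ∀ x ∈ frontier K, ∀ y ∈ frontier K, ∀ r : ℝ, 0 < r → x - c = r * (y - c) →
      x = y := by
    intro x hx y hy r hr h
    have e := hK.eq_of_mem_frontier_of_ray (v := y - c) hcl hc hr one_pos
      (by rw [Complex.real_smul, ← h]; simpa using hx) (by simpa using hy)
    subst e
    simpa using h
  have hslit : ∀ x ∈ C, -((x - c) / (q - c)) ∈ Complex.slitPlane := by
    intro x hx
    by_contra h
    rw [Complex.mem_slitPlane_iff, not_or] at h
    push Not at h
    have h1 : 0 ≤ ((x - c) / (q - c)).re := by simpa using h.1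
    have h2 : ((x - c) / (q - c)).im = 0 := by simpa using h.2
    have hz : (x - c) / (q - c) = (((x - c) / (q - c)).re : ℂ) :=
      Complex.ext rfl (by simpa using h2)
    have hne' : ((x - c) / (q - c)).re ≠ 0 := fun h' ↦ by
      rw [h', Complex.ofReal_zero] at hz
      exact div_ne_zero (hne x (hsub hx)) hq0 hz
    refine hqC ((hray x (hsub hx) q hq _ (lt_of_le_of_ne h1 hne'.symm) ?_) ▸ hx)
    rw [← hz, div_mul_cancel₀ _ hq0]
  obtain ⟨f, hf, hper, hinj, rfl⟩ := hC
  refine Function.Periodic.not_injOn_Ico_of_continuous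
    (g := fun t ↦ (-((f t - c) / (q - c))).arg) ?_ (fun t ↦ by simp only [hper t]) ?_
  · rw [continuous_iff_continuousAt]
    intro t
    exact (Complex.continuousAt_arg (hslit _ ⟨t, rfl⟩)).comp
      (f := fun t ↦ -((f t - c) / (q - c))) (by fun_prop)
  · intro s hs t ht hst
    apply hinj hs ht
    have hs0 : -((f s - c) / (q - c)) ≠ 0 :=
      neg_ne_zero.2 (div_ne_zero (hne _ (hsub ⟨s, rfl⟩)) hq0)
    have ht0 : -((f t - c) / (q - c)) ≠ 0 :=
      neg_ne_zero.2 (div_ne_zero (hne _ (hsub ⟨t, rfl⟩)) hq0)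
    obtain ⟨r₁, p1, e1⟩ := Complex.exists_pos_mul_cos_add_sin hs0 hst
    obtain ⟨r₂, p2, e2⟩ := Complex.exists_pos_mul_cos_add_sin ht0 rfl
    refine hray _ (hsub ⟨s, rfl⟩) _ (hsub ⟨t, rfl⟩) (r₁ / r₂) (div_pos p1 p2) ?_
    have p2' : (r₂ : ℂ) ≠ 0 := by exact_mod_cast p2.ne'
    have e : (f s - c) / (q - c) = ((r₁ / r₂ : ℝ) : ℂ) * ((f t - c) / (q - c)) := by
      rw [← neg_inj, ← mul_neg, e1, e2]
      push_cast
      field_simp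
    rwa [← mul_div_assoc, div_left_inj' hq0] at e

/-- The convex hull of a planar Jordan curve has interior points. -/
theorem IsJordanCurve.interior_convexHull_nonempty {C : Set ℂ} (hC : IsJordanCurve C) :
    (interior (convexHull ℝ C)).Nonempty := by
  obtain ⟨f, hf, hper, hinj, rfl⟩ := hC
  rw [interior_convexHull_nonempty_iff_affineSpan_eq_top,
    AffineSubspace.affineSpan_eq_top_iff_vectorSpan_eq_top_of_nonempty _ _ _ (range_nonempty f)]
  by_contra hspan
  have hlt := Submodule.finrank_lt (lt_top_iff_ne_top.2 hspan).ne
  rw [Complex.finrank_real_complex] at hlt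
  have hcol := collinear_iff_finrank_le_one.2 (Nat.lt_succ_iff.1 hlt)
  obtain ⟨p, v, h⟩ := (collinear_iff_exists_forall_eq_smul_vadd _).1 hcol
  have hline : ∀ t, f t = (((f t - p) / v).re : ℂ) * v + p := by
    intro t
    obtain ⟨r, hr⟩ := h _ ⟨t, rfl⟩
    rw [hr]
    by_cases hv : v = 0
    · simp [hv]
    · simp [hv]
  refine Function.Periodic.not_injOn_Ico_of_continuous (g := fun t ↦ ((f t - p) / v).re)
    (by fun_prop) (fun t ↦ by simp only [hper t]) fun s hs t ht hst ↦ hinj hs ht ?_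
  rw [hline s, hline t]
  simp only at hst
  rw [hst]

/-- A planar Jordan curve containing every segment between two of its points that has a third
point of the curve inside lies on the frontier of its closed convex hull. -/
theorem IsJordanCurve.notMem_interior_closure_convexHull {C : Set ℂ} (hC : IsJordanCurve C)
    (hseg : ∀ x ∈ C, ∀ y ∈ C, ∀ z ∈ C, y ∈ openSegment ℝ x z → segment ℝ x z ⊆ C)
    {p : ℂ} (hp : p ∈ C) : p ∉ interior (closure (convexHull ℝ C)) := by
  intro hpi
  obtain ⟨f, hf, hper, hinj, hrange, hf0⟩ := hC.exists_param hp
  have hSC : ∀ v ∈ (fun t ↦ f t - p) '' Ioo 0 1, p + v ∈ C := by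
    rintro _ ⟨t, -, rfl⟩
    simp [← hrange]
  have hS0 : (0 : ℂ) ∉ (fun t ↦ f t - p) '' Ioo 0 1 := by
    rintro ⟨t, ht, h⟩
    have := hinj ⟨ht.1.le, ht.2⟩ (by norm_num) ((sub_eq_zero.1 h).trans hf0.symm)
    exact ht.1.ne' this
  have hhalf : ∀ w : ℂ, w ≠ 0 → ∃ s ∈ (fun t ↦ f t - p) '' Ioo 0 1, (s * w).re < 0 := by
    intro w hw
    by_contra! hcon
    have hCH : C ⊆ {z : ℂ | 0 ≤ ((z - p) * w).re} := by
      rw [← hrange]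
      rintro _ ⟨r, rfl⟩
      obtain ⟨u, hu, hru⟩ := hper.exists_mem_Ico₀ one_pos r
      rw [hru]
      rcases hu.1.eq_or_lt with rfl | h
      · simp [hf0]
      · exact hcon _ ⟨u, ⟨h, hu.2⟩, rfl⟩
    have hconv : Convex ℝ {z : ℂ | 0 ≤ ((z - p) * w).re} := by
      intro x hx y hy a b ha hb hab
      rw [mem_ofPred_eq] at hx hy ⊢
      have : (a • x + b • y - p) * w = a * ((x - p) * w) + b * ((y - p) * w) := by
        have hab' : (a + b : ℂ) = 1 := by exact_mod_cast hab
        simp only [Complex.real_smul]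
        linear_combination p * w * hab'
      rw [this, Complex.add_re, Complex.re_ofReal_mul, Complex.re_ofReal_mul]
      positivity
    have hclosed : IsClosed {z : ℂ | 0 ≤ ((z - p) * w).re} :=
      isClosed_le continuous_const (by fun_prop)
    have hsub := closure_minimal (convexHull_min hCH hconv) hclosed
    have hcont : Tendsto (fun ε : ℝ ↦ p - ε * (starRingEnd ℂ) w) (𝓝[>] 0) (𝓝 p) := by
      have : Continuous fun ε : ℝ ↦ p - ε * (starRingEnd ℂ) w := by fun_prop
      simpa using (this.tendsto 0).mono_left nhdsWithin_le_nhds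
    obtain ⟨ε, hε, hεpos⟩ := ((hcont.eventually (mem_interior_iff_mem_nhds.1 hpi)).and
      self_mem_nhdsWithin).exists
    have h1 : 0 ≤ ((p - ε * (starRingEnd ℂ) w - p) * w).re := hsub hε
    have h2 : (p - ε * (starRingEnd ℂ) w - p) * w = ((-(ε * Complex.normSq w) : ℝ) : ℂ) := by
      push_cast
      rw [← Complex.mul_conj]
      ring
    rw [h2, Complex.ofReal_re] at h1
    have := mul_pos (mem_Ioi.1 hεpos) (Complex.normSq_pos.2 hw)
    linarith
  obtain ⟨a, ha, b, hb, c, d, hc, hd, hca, hdb, him⟩ :=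
    (isPreconnected_Ioo.image (fun t ↦ f t - p) (by fun_prop)).exists_two_opposite_pairs hS0 hhalf
  have ha0 : a ≠ 0 := fun h ↦ hS0 (h ▸ ha)
  have hb0 : b ≠ 0 := fun h ↦ hS0 (h ▸ hb)
  have rays : ∀ v : ℂ, ∀ r : ℝ, 0 < r → p + v ∈ C → p + -(r : ℂ) * v ∈ C →
      segment ℝ p (p + v) ⊆ C ∧ segment ℝ p (p + -(r : ℂ) * v) ⊆ C := by
    intro v r hr h1 h2
    have hmem : p ∈ openSegment ℝ (p + v) (p + -(r : ℂ) * v) := by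
      refine ⟨r / (1 + r), 1 / (1 + r), by positivity, by positivity, by field_simp; ring, ?_⟩
      have : (1 + r : ℂ) ≠ 0 := by exact_mod_cast (by positivity : (1 + r : ℝ) ≠ 0)
      simp only [Complex.real_smul]
      push_cast
      field_simp
      ring
    have hs := hseg _ h1 _ hp _ h2 hmem
    have hm := openSegment_subset_segment ℝ _ _ hmem
    exact ⟨((convex_segment _ _).segment_subset hm (left_mem_segment ℝ _ _)).trans hs,
      ((convex_segment _ _).segment_subset hm (right_mem_segment ℝ _ _)).trans hs⟩
  obtain ⟨s1, s2⟩ := rays a c hc (hSC _ ha) (hSC _ hca)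
  obtain ⟨s3, -⟩ := rays b d hd (hSC _ hb) (hSC _ hdb)
  have hba : ∀ x y : ℝ, y ≠ 0 → (x : ℂ) * a ≠ y * b := by
    intro x y hy h
    have hy' : (y : ℂ) ≠ 0 := by exact_mod_cast hy
    have : b / a = ((x / y : ℝ) : ℂ) := by
      push_cast
      rw [div_eq_div_iff ha0 hy']
      linear_combination -h
    exact him (by rw [this, Complex.ofReal_im])
  have hc' : (c : ℂ) ≠ 0 := by exact_mod_cast hc.ne'
  refine hC.not_three_segments s1 s2 s3 ha0 (mul_ne_zero (neg_ne_zero.2 hc') ha0) hb0 ?_ ?_ ?_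
  · intro x y hx hy h
    simp only [Complex.real_smul, ← mul_assoc] at h
    have h' := mul_right_cancel₀ ha0 h
    have : x = -(y * c) := by
      have : (x : ℂ) = ((-(y * c) : ℝ) : ℂ) := by push_cast; linear_combination h'
      exact_mod_cast this
    have := mul_pos hy hc
    linarith
  · intro x y _ hy h
    exact hba x y hy.ne' h
  · intro x y _ hy h
    refine hba (-(x * c)) y hy.ne' ?_
    simp only [Complex.real_smul] at h
    push_cast
    linear_combination h

theorem IsJordanCurve.isCompact {X : Type*} [NormedAddCommGroup X] [NormedSpace ℝ X] {C : Set X}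
    (hC : IsJordanCurve C) : IsCompact C := by
  obtain ⟨f, hf, hper, -, rfl⟩ := hC
  exact hper.compact_of_continuous one_ne_zero hf

theorem IsJordanCurve.enclosesConvex_complex {C : Set ℂ} (hC : IsJordanCurve C)
    (hseg : ∀ x ∈ C, ∀ y ∈ C, ∀ z ∈ C, y ∈ openSegment ℝ x z → segment ℝ x z ⊆ C) :
    EnclosesConvex C := by
  have hint : (interior (closure (convexHull ℝ C))).Nonempty :=
    hC.interior_convexHull_nonempty.mono (interior_mono subset_closure)
  have hconv : Convex ℝ (closure (convexHull ℝ C)) := (convex_convexHull ℝ C).closure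
  refine ⟨_, (isBounded_convexHull.2 hC.isCompact.isBounded).isCompact_closure, hconv, hint,
    hC.eq_frontier hconv isClosed_closure hint fun p hp ↦ ?_⟩
  rw [isClosed_closure.frontier_eq]
  exact ⟨subset_closure (subset_convexHull ℝ C hp), hC.notMem_interior_closure_convexHull hseg hp⟩

theorem IsJordanCurve.enclosesConvex {X : Type*} [NormedAddCommGroup X] [NormedSpace ℝ X]
    (hdim : Module.finrank ℝ X = 2) {C : Set X} (hC : IsJordanCurve C)
    (hseg : ∀ x ∈ C, ∀ y ∈ C, ∀ z ∈ C, y ∈ openSegment ℝ x z → segment ℝ x z ⊆ C) :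
    EnclosesConvex C := by
  have : FiniteDimensional ℝ X := Module.finite_of_finrank_pos (by omega)
  let e : X ≃L[ℝ] ℂ :=
    ContinuousLinearEquiv.ofFinrankEq (by rw [hdim, Complex.finrank_real_complex])
  have hC' : IsJordanCurve (e '' C) := by
    obtain ⟨f, hf, hper, hinj, rfl⟩ := hC
    exact ⟨e ∘ f, e.continuous.comp hf, hper.comp e, e.injective.comp_injOn hinj, range_comp e f⟩
  obtain ⟨K, hK, hconv, hint, hfr⟩ := hC'.enclosesConvex_complex (by
    rintro _ ⟨x, hx, rfl⟩ _ ⟨y, hy, rfl⟩ _ ⟨z, hz, rfl⟩ h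
    have himg := image_openSegment ℝ (e : X →ₗ[ℝ] ℂ).toAffineMap x z
    have himg' := image_segment ℝ (e : X →ₗ[ℝ] ℂ).toAffineMap x z
    simp at himg himg'
    rw [← himg] at h
    rw [← himg']
    exact image_mono (hseg x hx y hy z hz ((e.injective.mem_set_image).1 h)))
  refine ⟨e ⁻¹' K, e.toHomeomorph.isCompact_preimage.2 hK,
    hconv.linear_preimage (e : X →ₗ[ℝ] ℂ), ?_, ?_⟩
  · have := e.toHomeomorph.preimage_interior K
    simp at this
    rw [← this]
    exact hint.preimage e.surjective
  · have := e.toHomeomorph.preimage_frontier K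
    simp at this
    rw [← this, ← hfr, preimage_image_eq _ e.injective]

theorem EnclosesConvex.segment_subset {X : Type*} [NormedAddCommGroup X] [NormedSpace ℝ X]
    {C : Set X} (hC : EnclosesConvex C) {x y z : X} (hx : x ∈ C) (hy : y ∈ C) (hz : z ∈ C)
    (h : y ∈ openSegment ℝ x z) : segment ℝ x z ⊆ C := by
  obtain ⟨K, hK, hconv, -, rfl⟩ := hC
  rw [hK.isClosed.frontier_eq] at *
  intro w hw
  refine ⟨hconv.segment_subset hx.1 hz.1 hw, fun hwi ↦ hy.2 ?_⟩
  have hwx := hconv.openSegment_interior_self_subset_interior hwi hx.1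
  have hwz := hconv.openSegment_interior_self_subset_interior hwi hz.1
  rw [openSegment_eq_image_lineMap] at h
  rw [segment_eq_image_lineMap] at hw
  obtain ⟨s, hs, rfl⟩ := h
  obtain ⟨t, ht, rfl⟩ := hw
  rcases lt_trichotomy s t with hst | rfl | hst
  · apply hwx
    have ht0 := hs.1.trans hst
    refine ⟨s / t, 1 - s / t, div_pos hs.1 ht0, sub_pos.2 ((div_lt_one ht0).2 hst), by ring, ?_⟩
    simp only [AffineMap.lineMap_apply_module]
    match_scalars <;> field_simp
    ring
  · exact hwi
  · apply hwz
    have ht1 : 0 < 1 - t := by linarith [hs.2]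
    refine ⟨(1 - s) / (1 - t), 1 - (1 - s) / (1 - t), div_pos (by linarith [hs.2]) ht1,
      sub_pos.2 ((div_lt_one ht1).2 (by linarith)), by ring, ?_⟩
    simp only [AffineMap.lineMap_apply_module]
    match_scalars <;> field_simp
    ring

theorem mem_openSegment_iff_norm {X : Type*} [NormedAddCommGroup X] [NormedSpace ℝ X]
    [StrictConvexSpace ℝ X] {x y z : X} (hxz : x ≠ z) :
    y ∈ openSegment ℝ x z ↔ y ≠ x ∧ y ≠ z ∧ ‖x - z‖ = ‖x - y‖ + ‖y - z‖ := by
  have hw : ‖x - z‖ = ‖x - y‖ + ‖y - z‖ ↔ y ∈ segment ℝ x z := by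
    rw [mem_segment_iff_wbtw, ← dist_add_dist_eq_iff, dist_eq_norm, dist_eq_norm, dist_eq_norm,
      eq_comm]
  rw [hw]
  constructor
  · intro h
    refine ⟨?_, ?_, openSegment_subset_segment ℝ _ _ h⟩
    · rintro rfl
      exact hxz (left_mem_openSegment_iff.1 h)
    · rintro rfl
      exact hxz (right_mem_openSegment_iff.1 h)
  · rintro ⟨h1, h2, h⟩
    exact mem_openSegment_of_ne_left_right h1.symm h2.symm h

/-- In a strictly convex plane, a Jordan curve encloses a convex region iff it contains every
segment joining two of its points and passing through a third one. -/
theorem IsJordanCurve.enclosesConvex_iff {X : Type*} [NormedAddCommGroup X] [NormedSpace ℝ X]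
    [StrictConvexSpace ℝ X] (hdim : Module.finrank ℝ X = 2) {C : Set X} (hC : IsJordanCurve C) :
    EnclosesConvex C ↔
      ∀ z1 ∈ C, ∀ z2 ∈ C, ∀ z3 ∈ C, z2 ≠ z1 → z2 ≠ z3 →
        ‖z1 - z3‖ = ‖z1 - z2‖ + ‖z2 - z3‖ → segment ℝ z1 z3 ⊆ C := by
  constructor
  · intro h x hx y hy z hz hyx hyz hn
    have hxz : x ≠ z := by
      rintro rfl
      have : 0 < ‖x - y‖ := norm_pos_iff.2 (sub_ne_zero.2 hyx.symm)
      have : 0 ≤ ‖y - x‖ := norm_nonneg _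
      rw [sub_self, norm_zero] at hn
      linarith
    exact h.segment_subset hx hy hz ((mem_openSegment_iff_norm hxz).2 ⟨hyx, hyz, hn⟩)
  · intro h
    refine hC.enclosesConvex hdim fun x hx y hy z hz hm ↦ ?_
    rcases eq_or_ne x z with rfl | hxz
    · rw [segment_same]
      exact singleton_subset_iff.2 hx
    · obtain ⟨h1, h2, h3⟩ := (mem_openSegment_iff_norm hxz).1 hm
      exact h x hx y hy z hz h1 h2 h3

/-- Let `X` be a strictly convex normed plane. A Jordan curve
`C ⊆ X` encloses a convex region iff for all `z¹, z², z³ ∈ C` with `z²` strictly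
metrically between `z¹` and `z³` (i.e. `‖z¹-z³‖ = ‖z¹-z²‖ + ‖z²-z³‖`, `z² ≠ z¹, z³`),
the segment `[z¹, z³]` is contained in `C`. Consequently, if `C_X` encloses a convex
region and `τ : C_X → C_Y` is a surjective isometry onto a Jordan curve `C_Y` in a
strictly convex normed plane `Y`, then `C_Y` also encloses a convex region. -/
theorem stmt11 {X Y : Type*} [NormedAddCommGroup X] [NormedSpace ℝ X]
    [NormedAddCommGroup Y] [NormedSpace ℝ Y]
    [StrictConvexSpace ℝ X] [StrictConvexSpace ℝ Y]
    (hdimX : Module.finrank ℝ X = 2) (hdimY : Module.finrank ℝ Y = 2) :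
    (∀ C : Set X, IsJordanCurve C →
      (EnclosesConvex C ↔
        ∀ z1 ∈ C, ∀ z2 ∈ C, ∀ z3 ∈ C, z2 ≠ z1 → z2 ≠ z3 →
          ‖z1 - z3‖ = ‖z1 - z2‖ + ‖z2 - z3‖ → segment ℝ z1 z3 ⊆ C)) ∧
    (∀ (CX : Set X) (CY : Set Y) (τ : X → Y),
      IsJordanCurve CX → EnclosesConvex CX → IsJordanCurve CY →
      Set.MapsTo τ CX CY → Set.SurjOn τ CX CY →
      (∀ u ∈ CX, ∀ v ∈ CX, ‖τ u - τ v‖ = ‖u - v‖) →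
      EnclosesConvex CY) := by
  refine ⟨fun C hC ↦ hC.enclosesConvex_iff hdimX, fun CX CY τ hCX hX hCY hmaps hsurj hiso ↦ ?_⟩
  rw [hCY.enclosesConvex_iff hdimY]
  rintro w1 hw1 w2 hw2 w3 hw3 h21 h23 hn
  obtain ⟨z1, hz1, rfl⟩ := hsurj hw1
  obtain ⟨z2, hz2, rfl⟩ := hsurj hw2
  obtain ⟨z3, hz3, rfl⟩ := hsurj hw3
  have hsub := (hCX.enclosesConvex_iff hdimX).1 hX z1 hz1 z2 hz2 z3 hz3
    (fun h ↦ h21 (by rw [h])) (fun h ↦ h23 (by rw [h]))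
    (by rwa [hiso _ hz1 _ hz3, hiso _ hz1 _ hz2, hiso _ hz2 _ hz3] at hn)
  rw [segment_eq_image_lineMap] at hsub ⊢
  rintro _ ⟨t, ht, rfl⟩
  have hm := hsub ⟨t, ht, rfl⟩
  have heq : τ (AffineMap.lineMap z1 z3 t) = AffineMap.lineMap (τ z1) (τ z3) t := by
    apply eq_lineMap_of_dist_eq_mul_of_dist_eq_mul
    · rw [dist_eq_norm, dist_eq_norm, hiso _ hz1 _ hm, hiso _ hz1 _ hz3, ← dist_eq_norm,
        ← dist_eq_norm, dist_left_lineMap, Real.norm_of_nonneg ht.1]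
    · rw [dist_eq_norm, dist_eq_norm, hiso _ hm _ hz3, hiso _ hz1 _ hz3, ← dist_eq_norm,
        ← dist_eq_norm, dist_lineMap_right, Real.norm_of_nonneg (sub_nonneg.2 ht.2)]
  exact heq ▸ hmaps hm
end

section
/- Let X, Y be strictly convex normed planes such that the sets of non-differentiability points of their norms on the unit spheres are finite with more than three elements each. Let C_X ⊂ X be a piecewise C¹ Jordan curve enclosing a convex region, and let τ : C_X → C_Y be a surjective isometry onto a piecewise C¹ curve C_Y ⊂ Y. Then τ is affine; in particular X and Y are linearly isometric. -/
/-- `γ` is a natural (arc-length) parameterization of the closed curve `C`, with period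
`L`, which is piecewise `C¹`: it has one-sided derivatives of norm one everywhere and is
differentiable except at the points of a finite set `F ⊆ C`. -/
def IsPiecewiseC1NaturalParam {X : Type*} [NormedAddCommGroup X] [NormedSpace ℝ X]
    (C : Set X) (γ : ℝ → X) (L : ℝ) (F : Set X) : Prop :=
  0 < L ∧ Function.Periodic γ L ∧ Set.range γ = C ∧ Set.InjOn γ (Set.Ico 0 L) ∧
    F.Finite ∧ F ⊆ C ∧
    (∀ t : ℝ, ∃ dp dm : X, ‖dp‖ = 1 ∧ ‖dm‖ = 1 ∧
      HasDerivWithinAt γ dp (Set.Ici t) t ∧ HasDerivWithinAt γ dm (Set.Iic t) t) ∧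
    (∀ t : ℝ, γ t ∉ F → DifferentiableAt ℝ γ t)

/-- A piecewise `C¹` Jordan curve. -/
def IsPiecewiseC1JordanCurve {X : Type*} [NormedAddCommGroup X] [NormedSpace ℝ X]
    (C : Set X) : Prop :=
  ∃ (γ : ℝ → X) (L : ℝ) (F : Set X), IsPiecewiseC1NaturalParam C γ L F

section

open Set Filter Topology Asymptotics

/-- A pair of vectors spanning a real normed plane, with its continuous coordinate functionals. -/
structure PlaneFrame (X : Type*) [NormedAddCommGroup X] [NormedSpace ℝ X] where
  u : X
  v : X
  cu : X →L[ℝ] ℝ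
  cv : X →L[ℝ] ℝ
  repr : ∀ x, cu x • u + cv x • v = x
  cu_comb : ∀ a b : ℝ, cu (a • u + b • v) = a
  cv_comb : ∀ a b : ℝ, cv (a • u + b • v) = b

namespace PlaneFrame

variable {X : Type*} [NormedAddCommGroup X] [NormedSpace ℝ X]

/-- The frame with the first vector negated. -/
def negFst (F : PlaneFrame X) : PlaneFrame X where
  u := -F.u
  v := F.v
  cu := -F.cu
  cv := F.cv
  repr x := by simpa using F.repr x
  cu_comb a b := by
    have := F.cu_comb (-a) b
    rw [neg_smul, ← smul_neg] at this
    rw [neg_apply, this, neg_neg]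
  cv_comb a b := by simpa using F.cv_comb (-a) b

/-- The frame with the second vector negated. -/
def negSnd (F : PlaneFrame X) : PlaneFrame X where
  u := F.u
  v := -F.v
  cu := F.cu
  cv := -F.cv
  repr x := by simpa using F.repr x
  cu_comb a b := by simpa using F.cu_comb a (-b)
  cv_comb a b := by
    have := F.cv_comb a (-b)
    rw [neg_smul, ← smul_neg] at this
    rw [neg_apply, this, neg_neg]

theorem exists_of_ne_zero (hdim : Module.finrank ℝ X = 2) {u : X} (hu : u ≠ 0) :
    ∃ F : PlaneFrame X, F.u = u := by
  have : FiniteDimensional ℝ X := Module.finite_of_finrank_pos (hdim ▸ two_pos)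
  obtain ⟨v, hv⟩ := exists_linearIndependent_pair_of_one_lt_finrank (hdim ▸ one_lt_two) hu
  let b := basisOfLinearIndependentOfCardEqFinrank hv (by simp [hdim])
  have hb0 : b 0 = u := by simp [b]
  have hb1 : b 1 = v := by simp [b]
  refine ⟨⟨u, v, LinearMap.toContinuousLinearMap (b.coord 0),
    LinearMap.toContinuousLinearMap (b.coord 1), fun x ↦ ?_, fun s t ↦ ?_, fun s t ↦ ?_⟩, rfl⟩
  · have := b.sum_repr x
    rw [Fin.sum_univ_two, hb0, hb1] at this
    simpa using this
  · rw [← hb0, ← hb1]; simp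
  · rw [← hb0, ← hb1]; simp

theorem exists_upper_boundary (F : PlaneFrame X) {K : Set X} (hK : IsCompact K)
    (hconv : Convex ℝ K) :
    ∃ r : ℝ → ℝ, ConcaveOn ℝ (F.cv '' interior K) r ∧
      (∀ y ∈ F.cv '' interior K, r y • F.u + y • F.v ∈ frontier K) ∧
      ∀ p ∈ interior K, F.cu p < r (F.cv p) := by
  set S : ℝ → Set ℝ := fun y ↦ {x | x • F.u + y • F.v ∈ K} with hS
  have hbdd : ∀ y, BddAbove (S y) := fun y ↦ by
    refine (hK.image F.cu.continuous).bddAbove.mono ?_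
    exact fun x hx ↦ ⟨_, hx, F.cu_comb x y⟩
  have hclosed : ∀ y, IsClosed (S y) := fun y ↦
    hK.isClosed.preimage (by fun_prop)
  have hmem : ∀ p ∈ K, F.cu p ∈ S (F.cv p) := fun p hp ↦ by
    simpa [hS, F.repr] using hp
  have hne : ∀ y ∈ F.cv '' interior K, (S y).Nonempty := by
    rintro _ ⟨p, hp, rfl⟩
    exact ⟨_, hmem p (interior_subset hp)⟩
  have hmax : ∀ y ∈ F.cv '' interior K, sSup (S y) ∈ S y := fun y hy ↦
    (hclosed y).csSup_mem (hne y hy) (hbdd y)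
  have hlt : ∀ p ∈ interior K, F.cu p < sSup (S (F.cv p)) := by
    intro p hp
    have h1 : ∀ᶠ t in 𝓝 (F.cu p), t • F.u + F.cv p • F.v ∈ interior K := by
      have : Continuous fun t : ℝ ↦ t • F.u + F.cv p • F.v := by fun_prop
      refine this.continuousAt.eventually_mem (isOpen_interior.mem_nhds ?_)
      rwa [F.repr]
    obtain ⟨t, ht, htp⟩ := ((h1.filter_mono nhdsWithin_le_nhds).and
      (self_mem_nhdsWithin : Ioi (F.cu p) ∈ 𝓝[>] (F.cu p))).exists
    exact lt_of_lt_of_le htp (le_csSup (hbdd _) (interior_subset (s := K) ht))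
  refine ⟨fun y ↦ sSup (S y), ⟨?_, ?_⟩, ?_, hlt⟩
  · exact hconv.interior.is_linear_image F.cv.toLinearMap.isLinear
  · intro y hy z hz a b ha hb hab
    refine le_csSup (hbdd _) ?_
    have := hconv (hmax y hy) (hmax z hz) ha hb hab
    simp only [hS, mem_ofPred_eq] at this ⊢
    convert this using 1
    simp only [smul_eq_mul, smul_add, smul_smul, add_smul]
    abel
  · intro y hy
    rw [hK.isClosed.frontier_eq]
    refine ⟨hmax y hy, fun h ↦ ?_⟩
    have := hlt _ h
    rw [F.cu_comb, F.cv_comb] at this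
    exact lt_irrefl _ this

theorem exists_norm_expansion (F : PlaneFrame X) (hu : ‖F.u‖ = 1) :
    ∃ p q : ℝ, q ≤ p ∧ (q = p → DifferentiableAt ℝ (fun z : X ↦ ‖z‖) F.u) ∧
      ∀ ℓ : ℝ, 0 < ℓ → (fun x : ℝ × ℝ ↦ ‖(ℓ + x.1) • F.u + x.2 • F.v‖ -
        (ℓ + x.1 + max (p * x.2) (q * x.2))) =o[𝓝 0] (fun x : ℝ × ℝ ↦ x) := by
  set g : ℝ → ℝ := fun b ↦ ‖F.u + b • F.v‖ with hg
  have hgc : ConvexOn ℝ univ g := by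
    refine ⟨convex_univ, fun x _ y _ a b ha hb hab ↦ ?_⟩
    have : F.u + (a • x + b • y) • F.v = a • (F.u + x • F.v) + b • (F.u + y • F.v) := by
      calc _ = (a + b) • F.u + (a • x + b • y) • F.v := by rw [hab, one_smul]
        _ = _ := by simp only [smul_eq_mul, smul_add, smul_smul, add_smul]; abel
    simp only [hg, this]
    refine (norm_add_le _ _).trans_eq ?_
    rw [norm_smul, norm_smul, Real.norm_of_nonneg ha, Real.norm_of_nonneg hb, smul_eq_mul,
      smul_eq_mul]
  have h0 : (0 : ℝ) ∈ interior (univ : Set ℝ) := by simp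
  have hg0 : g 0 = 1 := by simp [hg, hu]
  have hp := hgc.hasDerivWithinAt_rightDeriv_of_mem_interior h0
  have hq := hgc.hasDerivWithinAt_leftDeriv_of_mem_interior h0
  have hqp := hgc.leftDeriv_le_rightDeriv_of_mem_interior h0
  set p := derivWithin g (Ioi 0) 0
  set q := derivWithin g (Iio 0) 0
  set h : ℝ → ℝ := fun b ↦ g b - (1 + max (p * b) (q * b)) with hh
  have ho : h =o[𝓝 0] (fun b : ℝ ↦ b) := by
    rw [hasDerivWithinAt_iff_isLittleO] at hp hq
    rw [← nhdsLT_sup_nhdsGE, ← nhdsGT_sup_nhdsWithin_singleton]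
    refine isLittleO_sup.2 ⟨?_, isLittleO_sup.2 ⟨?_, ?_⟩⟩
    · refine hq.congr' ?_ (by simp)
      filter_upwards [self_mem_nhdsWithin] with b hb
      have : max (p * b) (q * b) = q * b := max_eq_right (by nlinarith [mem_Iio.1 hb])
      simp [hh, this, hg0]; ring
    · refine hp.congr' ?_ (by simp)
      filter_upwards [self_mem_nhdsWithin] with b hb
      have : max (p * b) (q * b) = p * b := max_eq_left (by nlinarith [mem_Ioi.1 hb])
      simp [hh, this, hg0]; ring
    · rw [nhdsWithin_singleton, isLittleO_pure]
      simp [hh, hg0]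
  have key : ∀ ℓ : ℝ, 0 < ℓ → (fun x : ℝ × ℝ ↦ ‖(ℓ + x.1) • F.u + x.2 • F.v‖ -
        (ℓ + x.1 + max (p * x.2) (q * x.2))) =o[𝓝 0] (fun x : ℝ × ℝ ↦ x) := by
    intro ℓ hℓ
    have hpos : ∀ᶠ x : ℝ × ℝ in 𝓝 0, 0 < ℓ + x.1 := by
      have : ContinuousAt (fun x : ℝ × ℝ ↦ ℓ + x.1) 0 := by fun_prop
      exact this.eventually (lt_mem_nhds (by simpa using hℓ))
    have ht : Tendsto (fun x : ℝ × ℝ ↦ x.2 / (ℓ + x.1)) (𝓝 0) (𝓝 0) := by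
      have : ContinuousAt (fun x : ℝ × ℝ ↦ x.2 / (ℓ + x.1)) 0 :=
        ContinuousAt.div (by fun_prop) (by fun_prop) (by simpa using hℓ.ne')
      simpa [ContinuousAt] using this
    have hb : (fun x : ℝ × ℝ ↦ ℓ + x.1) =O[𝓝 0] (fun _ ↦ (1 : ℝ)) := by
      have : ContinuousAt (fun x : ℝ × ℝ ↦ ℓ + x.1) 0 := by fun_prop
      exact this.tendsto.isBigO_one ℝ
    have h1 := (isBigO_refl (fun x : ℝ × ℝ ↦ ℓ + x.1) (𝓝 0)).mul_isLittleO (ho.comp_tendsto ht)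
    have h2 : (fun x : ℝ × ℝ ↦ (ℓ + x.1) * (x.2 / (ℓ + x.1))) =O[𝓝 0]
        (fun x : ℝ × ℝ ↦ x) := by
      refine (isBigO_snd_prod (f' := fun x : ℝ × ℝ ↦ x.1) (g' := fun x : ℝ × ℝ ↦ x.2)).congr' ?_
        (by simp)
      filter_upwards [hpos] with x hx
      field_simp
    refine (h1.trans_isBigO h2).congr' ?_ (by simp)
    filter_upwards [hpos] with x hx
    have e : (ℓ + x.1) • F.u + x.2 • F.v
        = (ℓ + x.1) • (F.u + (x.2 / (ℓ + x.1)) • F.v) := by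
      rw [smul_add, smul_smul, mul_div_cancel₀ _ hx.ne']
    rw [e, norm_smul, Real.norm_of_nonneg hx.le]
    have e2 : (ℓ + x.1) * max (p * (x.2 / (ℓ + x.1))) (q * (x.2 / (ℓ + x.1)))
        = max (p * x.2) (q * x.2) := by
      rw [mul_max_of_nonneg _ _ hx.le]
      congr 1 <;> field_simp
    simp only [hh, hg, Function.comp]
    rw [← e2]; ring
  refine ⟨p, q, hqp, fun hpq ↦ ?_, key⟩
  have hd : HasFDerivAt (fun z : X ↦ ‖z‖) (F.cu + p • F.cv) F.u := by
    rw [hasFDerivAt_iff_isLittleO_nhds_zero]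
    have hc : Tendsto (fun z : X ↦ (F.cu z, F.cv z)) (𝓝 0) (𝓝 0) := by
      have : Continuous (fun z : X ↦ (F.cu z, F.cv z)) := by fun_prop
      simpa [Prod.zero_eq_mk] using this.tendsto 0
    have hO : (fun z : X ↦ (F.cu z, F.cv z)) =O[𝓝 0] (fun z : X ↦ z) :=
      (F.cu.isBigO_id _).prod_left (F.cv.isBigO_id _)
    refine (((key 1 one_pos).comp_tendsto hc).trans_isBigO hO).congr_left fun z ↦ ?_
    have e : (1 + F.cu z) • F.u + F.cv z • F.v = F.u + z := by
      conv_rhs => rw [← F.repr z]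
      rw [add_smul, one_smul, add_assoc]
    simp [Function.comp, e, hpq, hu]
    ring
  exact hd.differentiableAt

end PlaneFrame

theorem exists_pos_add_smul_mem_frontier {X : Type*} [NormedAddCommGroup X] [NormedSpace ℝ X]
    {K : Set X} (hK : IsCompact K) {k d : X} (hk : k ∈ interior K) (hd : d ≠ 0) :
    ∃ t : ℝ, 0 < t ∧ k + t • d ∈ frontier K := by
  set S : Set ℝ := {t | k + t • d ∈ K} with hS
  have hcont : Continuous fun t : ℝ ↦ k + t • d := by fun_prop
  have hclosed : IsClosed S := hK.isClosed.preimage hcont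
  have hbdd : BddAbove S := by
    obtain ⟨M, hM⟩ := hK.isBounded.exists_norm_le
    refine ⟨(M + ‖k‖) / ‖d‖, fun t ht ↦ ?_⟩
    rw [le_div_iff₀ (norm_pos_iff.2 hd)]
    have h1 : ‖t • d‖ ≤ M + ‖k‖ := by
      calc ‖t • d‖ = ‖(k + t • d) - k‖ := by simp
        _ ≤ _ := (norm_sub_le _ _).trans (by gcongr; exact hM _ ht)
    rw [norm_smul] at h1
    exact (mul_le_mul_of_nonneg_right (le_abs_self t) (norm_nonneg _)).trans h1
  have hlt : ∀ t, k + t • d ∈ interior K → t < sSup S := by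
    intro t ht
    obtain ⟨s, hs, hts⟩ := (((hcont.continuousAt.eventually_mem
      (isOpen_interior.mem_nhds ht)).filter_mono nhdsWithin_le_nhds).and
      (self_mem_nhdsWithin : Ioi t ∈ 𝓝[>] t)).exists
    exact lt_of_lt_of_le hts (le_csSup hbdd (interior_subset (s := K) hs))
  have h0 : 0 < sSup S := hlt 0 (by simpa using hk)
  refine ⟨sSup S, h0, ?_⟩
  rw [hK.isClosed.frontier_eq]
  exact ⟨hclosed.csSup_mem ⟨0, by simpa [hS] using interior_subset hk⟩ hbdd,
    fun h ↦ lt_irrefl _ (hlt _ h)⟩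

theorem subset_closure_setOf_differentiableAt {V : Type*} [NormedAddCommGroup V]
    [NormedSpace ℝ V] [FiniteDimensional ℝ V] {f : ℝ → V} {I : Set ℝ} (hI : IsOpen I)
    (hf : LocallyLipschitzOn I f) : I ⊆ closure {y ∈ I | DifferentiableAt ℝ f y} := by
  intro y hy
  rw [mem_closure_iff_nhds]
  intro U hU
  obtain ⟨C, t, ht, hLip⟩ := hf hy
  rw [hI.nhdsWithin_eq hy] at ht
  obtain ⟨W, hWsub, hWo, hyW⟩ := mem_nhds_iff.1 (inter_mem (inter_mem hU ht) (hI.mem_nhds hy))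
  have hae : ∀ᵐ x, x ∈ W → DifferentiableWithinAt ℝ f W x :=
    (hLip.mono fun x hx ↦ (hWsub hx).1.2).ae_differentiableWithinAt_of_mem_real
  obtain ⟨x, hxW, hx⟩ := (MeasureTheory.Measure.dense_of_ae hae).inter_open_nonempty W hWo ⟨y, hyW⟩
  exact ⟨x, (hWsub hxW).1.1, (hWsub hxW).2,
    (hx hxW).differentiableAt (hWo.mem_nhds hxW)⟩

theorem eq_of_hasDerivWithinAt_Ici_zero {f : ℝ → ℝ} {I : Set ℝ} [hI : I.OrdConnected]
    (hf : ContinuousOn f I) (hd : ∀ y ∈ I, HasDerivWithinAt f 0 (Ici y) y) {x y : ℝ}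
    (hx : x ∈ I) (hy : y ∈ I) : f x = f y := by
  wlog hxy : x ≤ y generalizing x y
  · exact (this hy hx (le_of_not_ge hxy)).symm
  have hsub : Icc x y ⊆ I := hI.out hx hy
  exact (constant_of_has_deriv_right_zero (hf.mono hsub)
    (fun z hz ↦ hd z (hsub (Ico_subset_Icc_self hz))) y ⟨hxy, le_rfl⟩).symm

theorem eq_of_hasDerivWithinAt_Iic_zero {f : ℝ → ℝ} {I : Set ℝ} [hI : I.OrdConnected]
    (hf : ContinuousOn f I) (hd : ∀ y ∈ I, HasDerivWithinAt f 0 (Iic y) y) {x y : ℝ}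
    (hx : x ∈ I) (hy : y ∈ I) : f x = f y := by
  have hJ : (Neg.neg ⁻¹' I).OrdConnected := by
    refine ⟨fun a ha b hb c hc ↦ hI.out hb ha ⟨neg_le_neg hc.2, neg_le_neg hc.1⟩⟩
  have h := eq_of_hasDerivWithinAt_Ici_zero (f := fun t ↦ f (-t)) (I := Neg.neg ⁻¹' I)
    (hf.comp continuous_neg.continuousOn fun _ h ↦ h) (fun t ht ↦ ?_)
    (x := -x) (y := -y) (by simpa) (by simpa)
  · simpa using h
  · have := (hd (-t) ht).scomp t ((hasDerivAt_neg t).hasDerivWithinAt (s := Ici t))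
      (fun s hs ↦ neg_le_neg (mem_Ici.1 hs))
    simpa [Function.comp_def] using this

namespace PlaneFrame

variable {X : Type*} [NormedAddCommGroup X] [NormedSpace ℝ X]

/-- Near `ℓ • u`, with `ℓ > 0`, the norm is `ℓ + a + max (p * b) (q * b)` up to first order at
`(ℓ + a) • u + b • v`. -/
def NormExpansion (F : PlaneFrame X) (p q : ℝ) : Prop :=
  ∀ ℓ : ℝ, 0 < ℓ → (fun x : ℝ × ℝ ↦ ‖(ℓ + x.1) • F.u + x.2 • F.v‖ -
    (ℓ + x.1 + max (p * x.2) (q * x.2))) =o[𝓝 0] (fun x : ℝ × ℝ ↦ x)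

theorem NormExpansion.isLittleO {F : PlaneFrame X} {p q : ℝ} (h : F.NormExpansion p q)
    {a b : ℝ → ℝ} {y₀ a₀ b₀ : ℝ} (hpos : a₀ < a y₀) (hb₀ : b₀ = b y₀)
    {l : Filter ℝ} (hl : l ≤ 𝓝 y₀)
    (ha : (fun y ↦ a y - a y₀) =O[l] fun y ↦ y - y₀)
    (hb : (fun y ↦ b y - b y₀) =O[l] fun y ↦ y - y₀) :
    (fun y ↦ ‖(a y - a₀) • F.u + (b y - b₀) • F.v‖ -
      (a y - a₀ + max (p * (b y - b₀)) (q * (b y - b₀)))) =o[l] fun y ↦ y - y₀ := by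
  subst hb₀
  have hO : (fun y ↦ (a y - a y₀, b y - b y₀)) =O[l] fun y ↦ y - y₀ := ha.prod_left hb
  have h0 : Tendsto (fun y : ℝ ↦ y - y₀) l (𝓝 0) := by
    have : Tendsto (fun y : ℝ ↦ y - y₀) (𝓝 y₀) (𝓝 (y₀ - y₀)) :=
      (continuous_id.sub continuous_const).tendsto y₀
    rw [sub_self] at this
    exact this.mono_left hl
  refine (((h (a y₀ - a₀) (sub_pos.2 hpos)).comp_tendsto
    (hO.trans_tendsto h0)).trans_isBigO hO).congr_left fun y ↦ ?_
  have e : a y₀ - a₀ + (a y - a y₀) = a y - a₀ := by ring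
  simp only [Function.comp, e]

theorem NormExpansion.eq_of_differentiableAt {F : PlaneFrame X} {p q : ℝ}
    (h : F.NormExpansion p q) (hu : ‖F.u‖ = 1) (hqp : q ≤ p)
    {r : ℝ → ℝ} {y₀ l₀ : ℝ} (hpos : l₀ < r y₀)
    (hr : DifferentiableAt ℝ r y₀)
    (hd : DifferentiableAt ℝ (fun y ↦ ‖(r y - l₀) • F.u + (y - y₀) • F.v‖) y₀) : q = p := by
  have ho := h.isLittleO (b := fun y ↦ y) hpos rfl le_rfl hr.hasDerivAt.isBigO_sub
    (isBigO_refl _ _)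
  set D := fun y ↦ ‖(r y - l₀) • F.u + (y - y₀) • F.v‖ with hD
  have hrem : HasDerivAt (fun y ↦ D y - (r y - l₀ + max (p * (y - y₀)) (q * (y - y₀)))) 0 y₀ := by
    rw [hasDerivAt_iff_isLittleO]
    refine ho.congr_left fun y ↦ ?_
    simp [hD, norm_smul, hu, abs_of_pos (sub_pos.2 hpos)]
  obtain ⟨m', hm⟩ : ∃ m', HasDerivAt (fun y ↦ max (p * (y - y₀)) (q * (y - y₀))) m' y₀ := by
    refine ⟨_, ((hd.hasDerivAt.sub (hr.hasDerivAt.sub_const l₀)).sub hrem).congr_of_eventuallyEq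
      (Eventually.of_forall fun y ↦ ?_)⟩
    simp only [Pi.sub_apply]
    ring
  have hlin : ∀ c : ℝ, HasDerivAt (fun y ↦ c * (y - y₀)) c y₀ := fun c ↦ by
    simpa using ((hasDerivAt_id y₀).sub_const y₀).const_mul c
  have hp : HasDerivWithinAt (fun y ↦ max (p * (y - y₀)) (q * (y - y₀))) p (Ici y₀) y₀ := by
    refine (hlin p).hasDerivWithinAt.congr_of_mem (fun y hy ↦ max_eq_left ?_) self_mem_Ici
    exact mul_le_mul_of_nonneg_right hqp (sub_nonneg.2 hy)
  have hq : HasDerivWithinAt (fun y ↦ max (p * (y - y₀)) (q * (y - y₀))) q (Iic y₀) y₀ := by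
    refine (hlin q).hasDerivWithinAt.congr_of_mem (fun y hy ↦ max_eq_right ?_) self_mem_Iic
    exact mul_le_mul_of_nonpos_right hqp (sub_nonpos.2 hy)
  rw [(uniqueDiffWithinAt_Ici y₀).eq_deriv _ hp hm.hasDerivWithinAt,
    (uniqueDiffWithinAt_Iic y₀).eq_deriv _ hq hm.hasDerivWithinAt]

theorem NormExpansion.isLittleO_sub {Y : Type*} [NormedAddCommGroup Y] [NormedSpace ℝ Y]
    {F : PlaneFrame X} {G : PlaneFrame Y} {p q p' q' : ℝ}
    (hF : F.NormExpansion p q) (hG : G.NormExpansion p' q') {r A B : ℝ → ℝ} {y₀ l₀ A₀ : ℝ}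
    {l : Filter ℝ} (hl : l ≤ 𝓝 y₀) (hpos : l₀ < r y₀) (hA₀ : A y₀ - A₀ = r y₀ - l₀)
    (hr : (fun y ↦ r y - r y₀) =O[l] fun y ↦ y - y₀)
    (hA : (fun y ↦ A y - A y₀) =O[l] fun y ↦ y - y₀)
    (hB : (fun y ↦ B y - B y₀) =O[l] fun y ↦ y - y₀)
    (heq : ∀ᶠ y in l, ‖(A y - A₀) • G.u + (B y - B y₀) • G.v‖ =
      ‖(r y - l₀) • F.u + (y - y₀) • F.v‖) :
    (fun y ↦ (A y - A y₀ + max (p' * (B y - B y₀)) (q' * (B y - B y₀))) -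
      (r y - r y₀ + max (p * (y - y₀)) (q * (y - y₀)))) =o[l] fun y ↦ y - y₀ := by
  have h1 := hF.isLittleO (b := fun y ↦ y) hpos rfl hl hr (isBigO_refl _ _)
  have h2 := hG.isLittleO (a := A) (a₀ := A₀) (by linarith) rfl hl hA hB
  refine (h1.sub h2).congr' ?_ EventuallyEq.rfl
  filter_upwards [heq] with y hy
  rw [hy]
  linarith

theorem NormExpansion.exists_affine {Y : Type*} [NormedAddCommGroup Y] [NormedSpace ℝ Y]
    {F : PlaneFrame X} {G : PlaneFrame Y} {p q p' q' : ℝ}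
    (hF : F.NormExpansion p q) (hG : G.NormExpansion p' q') (hqp : q ≤ p) (hqp' : q' < p')
    {I : Set ℝ} (hIo : IsOpen I) [hI : I.OrdConnected] {r l A A₂ B : ℝ → ℝ}
    (hlr : ∀ y ∈ I, l y < r y) (hA₂ : ∀ y ∈ I, A y - A₂ y = r y - l y)
    (hr : ∀ y ∈ I, (fun z ↦ r z - r y) =O[𝓝 y] fun z ↦ z - y)
    (hA : ∀ y ∈ I, (fun z ↦ A z - A y) =O[𝓝 y] fun z ↦ z - y)
    (hB : ∀ y ∈ I, (fun z ↦ B z - B y) =O[𝓝 y] fun z ↦ z - y)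
    (hmono : MonotoneOn B I)
    (heq : ∀ y ∈ I, ∀ z ∈ I, ‖(A z - A₂ y) • G.u + (B z - B y) • G.v‖ =
      ‖(r z - l y) • F.u + (z - y) • F.v‖) :
    ∃ κ c μ c' : ℝ, ∀ y ∈ I, B y = κ * y + c ∧ A y = r y + μ * y + c' := by
  rcases I.eq_empty_or_nonempty with rfl | ⟨y₁, hy₁⟩
  · exact ⟨0, 0, 0, 0, fun y hy ↦ hy.elim⟩
  have hcont : ∀ {f : ℝ → ℝ}, (∀ y ∈ I, (fun z ↦ f z - f y) =O[𝓝 y] fun z ↦ z - y) →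
      ContinuousOn f I := by
    intro f hf y hy
    have h0 : Tendsto (fun z : ℝ ↦ z - y) (𝓝 y) (𝓝 0) :=
      tendsto_sub_nhds_zero_iff.2 tendsto_id
    exact ContinuousAt.continuousWithinAt
      (tendsto_sub_nhds_zero_iff.1 ((hf y hy).trans_tendsto h0))
  have hrc := hcont hr
  have hAc := hcont hA
  have hBc := hcont hB
  have hmain : ∀ y ∈ I, ∀ s : Set ℝ,
      (fun z ↦ (A z - A y + max (p' * (B z - B y)) (q' * (B z - B y))) -
      (r z - r y + max (p * (z - y)) (q * (z - y)))) =o[𝓝[s] y] fun z ↦ z - y := by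
    intro y hy s
    have hl : 𝓝[s] y ≤ 𝓝 y := nhdsWithin_le_nhds
    refine hF.isLittleO_sub hG hl (hlr y hy) (hA₂ y hy) ((hr y hy).mono hl) ((hA y hy).mono hl)
      ((hB y hy).mono hl) ?_
    exact hl (mem_of_superset (hIo.mem_nhds hy) fun z hz ↦ heq y hy z hz)
  set f : ℝ → ℝ → ℝ → ℝ := fun a b y ↦ A y + b * B y - r y - a * y with hf
  have hfc : ∀ a b, ContinuousOn (f a b) I := fun a b ↦ by fun_prop
  have h1 : ∀ y ∈ I, f p p' y = f p p' y₁ := by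
    intro y hy
    refine eq_of_hasDerivWithinAt_Ici_zero (hfc _ _) (fun y hy ↦ ?_) hy hy₁
    rw [hasDerivWithinAt_iff_isLittleO]
    refine (hmain y hy (Ici y)).congr' ?_ EventuallyEq.rfl
    filter_upwards [self_mem_nhdsWithin, nhdsWithin_le_nhds (hIo.mem_nhds hy)] with z hz hzI
    have hBz := sub_nonneg.2 (hmono hy hzI hz)
    rw [max_eq_left (mul_le_mul_of_nonneg_right hqp'.le hBz),
      max_eq_left (mul_le_mul_of_nonneg_right hqp (sub_nonneg.2 hz))]
    simp only [hf, smul_zero]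
    ring
  have h2 : ∀ y ∈ I, f q q' y = f q q' y₁ := by
    intro y hy
    refine eq_of_hasDerivWithinAt_Iic_zero (hfc _ _) (fun y hy ↦ ?_) hy hy₁
    rw [hasDerivWithinAt_iff_isLittleO]
    refine (hmain y hy (Iic y)).congr' ?_ EventuallyEq.rfl
    filter_upwards [self_mem_nhdsWithin, nhdsWithin_le_nhds (hIo.mem_nhds hy)] with z hz hzI
    have hBz := sub_nonpos.2 (hmono hzI hy hz)
    rw [max_eq_right (mul_le_mul_of_nonpos_right hqp'.le hBz),
      max_eq_right (mul_le_mul_of_nonpos_right hqp (sub_nonpos.2 hz))]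
    simp only [hf, smul_zero]
    ring
  have hne : p' - q' ≠ 0 := (sub_pos.2 hqp').ne'
  have hBy : ∀ y ∈ I, B y = (p - q) / (p' - q') * y
      + (f p p' y₁ - f q q' y₁) / (p' - q') := by
    intro y hy
    rw [← h1 y hy, ← h2 y hy]
    field_simp
    simp only [hf]
    ring
  refine ⟨_, _, p - p' * ((p - q) / (p' - q')),
    f p p' y₁ - p' * ((f p p' y₁ - f q q' y₁) / (p' - q')), fun y hy ↦ ⟨hBy y hy, ?_⟩⟩
  have e : A y = f p p' y - p' * B y + r y + p * y := by simp only [hf]; ring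
  rw [e, h1 y hy, hBy y hy]
  ring

end PlaneFrame

theorem ContinuousOn.strictMonoOn_or_strictAntiOn_of_injOn {f : ℝ → ℝ} {I : Set ℝ}
    [hI : I.OrdConnected] (hf : ContinuousOn f I) (hinj : InjOn f I) :
    StrictMonoOn f I ∨ StrictAntiOn f I := by
  rcases I.eq_empty_or_nonempty with rfl | hne
  · exact Or.inl fun x hx ↦ hx.elim
  have : Inhabited I := Classical.inhabited_of_nonempty hne.to_subtype
  have : StrictMono (Set.domRestrict I f) ∨ StrictAnti (Set.domRestrict I f) :=
    Continuous.strictMono_of_inj hf.domRestrict hinj.injective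
  exact this.imp strictMono_domRestrict.mp strictAntiOn_iff_strictAnti.mpr

theorem LocallyLipschitzOn.isBigO_sub {V : Type*} [NormedAddCommGroup V] {f : ℝ → V}
    {I : Set ℝ} (hI : IsOpen I) (hf : LocallyLipschitzOn I f) {y : ℝ} (hy : y ∈ I) :
    (fun z ↦ f z - f y) =O[𝓝 y] fun z ↦ z - y := by
  obtain ⟨C, t, ht, hLip⟩ := hf hy
  rw [hI.nhdsWithin_eq hy] at ht
  refine IsBigO.of_bound C ?_
  filter_upwards [ht] with z hz
  exact hLip.norm_sub_le hz (mem_of_mem_nhds ht)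

theorem PlaneFrame.locallyLipschitzOn_prodMk {X Y : Type*} [NormedAddCommGroup X]
    [NormedSpace ℝ X] [NormedAddCommGroup Y] (F : PlaneFrame X) {I : Set ℝ} {f : ℝ → ℝ} {g : ℝ → Y}
    (hf : LocallyLipschitzOn I f)
    (h : ∀ y ∈ I, ∀ z ∈ I, ‖g z - g y‖ = ‖(f z - f y) • F.u + (z - y) • F.v‖) :
    LocallyLipschitzOn I (fun y ↦ (f y, g y)) := by
  intro y hy
  obtain ⟨C, t, ht, hLip⟩ := hf hy
  refine ⟨_, t ∩ I, inter_mem ht self_mem_nhdsWithin,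
    (hLip.mono inter_subset_left).prodMk (LipschitzOnWith.of_dist_le_mul
      (K := C * ‖F.u‖₊ + ‖F.v‖₊) fun z hz w hw ↦ ?_)⟩
  rw [dist_eq_norm, h w hw.2 z hz.2]
  have h1 := hLip.norm_sub_le hz.1 hw.1
  calc _ ≤ ‖f z - f w‖ * ‖F.u‖ + ‖z - w‖ * ‖F.v‖ := by
        refine (norm_add_le _ _).trans_eq ?_
        rw [norm_smul, norm_smul]
    _ ≤ (C * ‖z - w‖) * ‖F.u‖ + ‖z - w‖ * ‖F.v‖ := by gcongr
    _ = _ := by push_cast; rw [dist_eq_norm]; ring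

/-- The right and left ends `r y` and `l y` of the chord at height `y` of a convex region in the
frame `F`, together with distance preserving images `σ y` and `ρ y` of these ends. -/
structure ChordIsometry {X Y : Type*} [NormedAddCommGroup X] [NormedSpace ℝ X]
    [NormedAddCommGroup Y] [NormedSpace ℝ Y] (F : PlaneFrame X) (I : Set ℝ) (r l : ℝ → ℝ)
    (σ ρ : ℝ → Y) : Prop where
  isOpen : IsOpen I
  ordConnected : I.OrdConnected
  lt : ∀ y ∈ I, l y < r y
  lipschitz_right : LocallyLipschitzOn I r
  lipschitz_left : LocallyLipschitzOn I l
  norm_right : ∀ y ∈ I, ∀ z ∈ I, ‖σ z - σ y‖ = ‖(r z - r y) • F.u + (z - y) • F.v‖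
  norm_left : ∀ y ∈ I, ∀ z ∈ I, ‖ρ z - ρ y‖ = ‖(l z - l y) • F.u + (z - y) • F.v‖
  norm_cross : ∀ y ∈ I, ∀ z ∈ I, ‖σ z - ρ y‖ = ‖(r z - l y) • F.u + (z - y) • F.v‖

namespace ChordIsometry

variable {X Y : Type*} [NormedAddCommGroup X] [NormedSpace ℝ X]
  [NormedAddCommGroup Y] [NormedSpace ℝ Y] {F : PlaneFrame X} {I : Set ℝ} {r l : ℝ → ℝ}
  {σ ρ : ℝ → Y}

theorem locallyLipschitzOn_right (h : ChordIsometry F I r l σ ρ) :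
    LocallyLipschitzOn I (fun y ↦ (r y, σ y)) :=
  F.locallyLipschitzOn_prodMk h.lipschitz_right h.norm_right

theorem continuousOn_left (h : ChordIsometry F I r l σ ρ) : ContinuousOn ρ I :=
  (F.locallyLipschitzOn_prodMk h.lipschitz_left h.norm_left).continuousOn.snd

theorem continuousOn_right (h : ChordIsometry F I r l σ ρ) : ContinuousOn σ I :=
  h.locallyLipschitzOn_right.continuousOn.snd

theorem norm_chord (h : ChordIsometry F I r l σ ρ) (hu : ‖F.u‖ = 1) {y : ℝ} (hy : y ∈ I) :
    ‖σ y - ρ y‖ = r y - l y := by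
  rw [h.norm_cross y hy y hy]
  simp [norm_smul, hu, abs_of_pos (sub_pos.2 (h.lt y hy))]

theorem not_differentiableAt (h : ChordIsometry F I r l σ ρ) (hu : ‖F.u‖ = 1)
    (hnd : ¬ DifferentiableAt ℝ (fun z : X ↦ ‖z‖) F.u) {y : ℝ} (hy : y ∈ I)
    (hd : DifferentiableAt ℝ (fun y ↦ (r y, σ y)) y) :
    ¬ DifferentiableAt ℝ (fun z : Y ↦ ‖z‖) (σ y - ρ y) := by
  intro hY
  obtain ⟨p, q, hqp, hpq, hexp⟩ := F.exists_norm_expansion hu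
  have hexp : F.NormExpansion p q := hexp
  refine hnd (hpq (hexp.eq_of_differentiableAt hu hqp (h.lt y hy) hd.fst ?_))
  have h1 : DifferentiableAt ℝ (fun z ↦ ‖σ z - ρ y‖) y :=
    DifferentiableAt.comp y (f := fun z ↦ σ z - ρ y) hY (hd.snd.sub_const _)
  refine h1.congr_of_eventuallyEq ?_
  filter_upwards [h.isOpen.mem_nhds hy] with z hz
  exact (h.norm_cross y hy z hz).symm

theorem exists_common_direction [FiniteDimensional ℝ Y] (h : ChordIsometry F I r l σ ρ)
    (hI : I.Nonempty) (hu : ‖F.u‖ = 1) (hnd : ¬ DifferentiableAt ℝ (fun z : X ↦ ‖z‖) F.u)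
    (hfin : {w : Y | ‖w‖ = 1 ∧ ¬ DifferentiableAt ℝ (fun z : Y ↦ ‖z‖) w}.Finite) :
    ∃ w : Y, ‖w‖ = 1 ∧ ¬ DifferentiableAt ℝ (fun z : Y ↦ ‖z‖) w ∧
      ∀ y ∈ I, σ y - ρ y = (r y - l y) • w := by
  set N := {w : Y | ‖w‖ = 1 ∧ ¬ DifferentiableAt ℝ (fun z : Y ↦ ‖z‖) w} with hN
  set W : ℝ → Y := fun y ↦ (r y - l y)⁻¹ • (σ y - ρ y) with hW
  have hpos : ∀ y ∈ I, 0 < r y - l y := fun y hy ↦ sub_pos.2 (h.lt y hy)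
  have hWc : ContinuousOn W I :=
    ((h.lipschitz_right.continuousOn.sub h.lipschitz_left.continuousOn).inv₀
      fun y hy ↦ (hpos y hy).ne').smul (h.continuousOn_right.sub h.continuousOn_left)
  have hdense := subset_closure_setOf_differentiableAt h.isOpen h.locallyLipschitzOn_right
  have hWN : MapsTo W I N := by
    intro y hy
    rw [← hfin.isClosed.closure_eq]
    refine ((hWc y hy).mono (sep_subset _ _)).mem_closure (hdense hy) fun z hz ↦ ⟨?_, ?_⟩
    · have := hpos z hz.1
      rw [norm_smul, h.norm_chord hu hz.1, norm_inv, Real.norm_of_nonneg this.le,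
        inv_mul_cancel₀ this.ne']
    · rw [← differentiableAt_norm_smul (inv_ne_zero (hpos z hz.1).ne')]
      exact h.not_differentiableAt hu hnd hz.1 hz.2
  have hsub : (W '' I).Subsingleton := by
    refine hfin.countable.isTotallyDisconnected _ hWN.image_subset ?_
    exact h.ordConnected.isPreconnected.image W hWc
  obtain ⟨y₁, hy₁⟩ := hI
  refine ⟨W y₁, (hWN hy₁).1, (hWN hy₁).2, fun y hy ↦ ?_⟩
  rw [hsub (mem_image_of_mem W hy₁) (mem_image_of_mem W hy), hW]
  simp only [smul_smul]
  rw [mul_inv_cancel₀ (hpos y hy).ne', one_smul]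

theorem injOn_height [StrictConvexSpace ℝ X] [StrictConvexSpace ℝ Y]
    (h : ChordIsometry F I r l σ ρ) {G : PlaneFrame Y}
    (hdir : ∀ y ∈ I, σ y - ρ y = (r y - l y) • G.u) : InjOn (fun y ↦ G.cv (σ y)) I := by
  intro y hy z hz hyz
  set a := r y • F.u + y • F.v with ha
  set b := l y • F.u + y • F.v with hb
  set c := r z • F.u + z • F.v with hc
  have e1 : dist (σ y) (ρ y) = dist a b := by
    rw [dist_eq_norm, dist_eq_norm, h.norm_cross y hy y hy]
    congr 1; simp only [ha, hb, sub_smul]; abel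
  have e2 : dist (σ z) (ρ y) = dist c b := by
    rw [dist_eq_norm, dist_eq_norm, h.norm_cross y hy z hz]
    congr 1; simp only [hc, hb, sub_smul]; abel
  have e3 : dist (σ z) (σ y) = dist c a := by
    rw [dist_eq_norm, dist_eq_norm, h.norm_right y hy z hz]
    congr 1; simp only [hc, ha, sub_smul]; abel
  have hcolY : Collinear ℝ {σ y, ρ y, σ z} := by
    rw [collinear_iff_of_mem (p₀ := σ y) (by simp)]
    refine ⟨G.u, ?_⟩
    simp only [mem_insert_iff, mem_singleton_iff, forall_eq_or_imp, forall_eq, vadd_eq_add]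
    refine ⟨⟨0, by simp⟩, ⟨-(r y - l y), ?_⟩, ⟨G.cu (σ z) - G.cu (σ y), ?_⟩⟩
    · rw [neg_smul, ← hdir y hy]; abel
    · have ey := G.repr (σ y)
      have ez := G.repr (σ z)
      rw [show G.cv (σ y) = G.cv (σ z) from hyz] at ey
      calc σ z = G.cu (σ z) • G.u + G.cv (σ z) • G.v := ez.symm
        _ = (G.cu (σ z) - G.cu (σ y)) • G.u + (G.cu (σ y) • G.u + G.cv (σ z) • G.v) := by module
        _ = _ := by rw [ey]
  have hcolX : Collinear ℝ {a, b, c} := by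
    have e1' := e1; have e2' := e2; have e3' := e3
    rw [dist_comm, dist_comm a] at e1'
    rw [dist_comm, dist_comm c] at e2'
    rw [dist_comm, dist_comm c] at e3'
    rcases hcolY.wbtw_or_wbtw_or_wbtw with hw | hw | hw <;> rw [← dist_add_dist_eq_iff] at hw
    · rw [e1, e2', e3', dist_add_dist_eq_iff] at hw
      exact hw.collinear
    · rw [e2', e3, e1', dist_add_dist_eq_iff] at hw
      have := hw.collinear
      rwa [show ({b, c, a} : Set X) = {a, b, c} by ext; simp; tauto] at this
    · rw [e3, e1, e2, dist_add_dist_eq_iff] at hw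
      have := hw.collinear
      rwa [show ({c, a, b} : Set X) = {a, b, c} by ext; simp; tauto] at this
  rw [collinear_iff_of_mem (p₀ := a) (by simp)] at hcolX
  obtain ⟨d, hd⟩ := hcolX
  obtain ⟨s, hs⟩ := hd b (by simp)
  obtain ⟨t, ht⟩ := hd c (by simp)
  rw [vadd_eq_add] at hs ht
  have hs1 := congrArg F.cu hs
  have hs2 := congrArg F.cv hs
  have ht2 := congrArg F.cv ht
  simp only [ha, hb, hc, map_add _ (_ • d), map_smul _ _ d, F.cu_comb, F.cv_comb, smul_eq_mul]
    at hs1 hs2 ht2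
  have hs0 : s ≠ 0 := by
    rintro rfl
    have := h.lt y hy
    linarith
  have hd0 : F.cv d = 0 := by
    have : s * F.cv d = 0 := by linarith
    exact (mul_eq_zero.1 this).resolve_left hs0
  rw [hd0] at ht2
  linarith

theorem exists_affineMap [StrictConvexSpace ℝ X] [StrictConvexSpace ℝ Y]
    (hdim : Module.finrank ℝ Y = 2) (h : ChordIsometry F I r l σ ρ)
    (hI : I.Nonempty) (hu : ‖F.u‖ = 1) (hnd : ¬ DifferentiableAt ℝ (fun z : X ↦ ‖z‖) F.u)
    (hfin : {w : Y | ‖w‖ = 1 ∧ ¬ DifferentiableAt ℝ (fun z : Y ↦ ‖z‖) w}.Finite) :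
    ∃ T : X →ᵃ[ℝ] Y, ∀ y ∈ I, T (r y • F.u + y • F.v) = σ y ∧
      T (l y • F.u + y • F.v) = ρ y := by
  have : FiniteDimensional ℝ Y := Module.finite_of_finrank_pos (hdim ▸ two_pos)
  have hIc := h.ordConnected
  obtain ⟨w, hw, hwnd, hdir⟩ := h.exists_common_direction hI hu hnd hfin
  obtain ⟨G, hGu, hmono⟩ : ∃ G : PlaneFrame Y, G.u = w ∧ MonotoneOn (fun y ↦ G.cv (σ y)) I := by
    obtain ⟨G, hG⟩ := PlaneFrame.exists_of_ne_zero hdim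
      (norm_pos_iff.1 (hw ▸ one_pos) : w ≠ 0)
    have hinj := h.injOn_height (G := G) (hG ▸ hdir)
    have hcont : ContinuousOn (fun y ↦ G.cv (σ y)) I :=
      G.cv.continuous.comp_continuousOn h.continuousOn_right
    rcases hcont.strictMonoOn_or_strictAntiOn_of_injOn hinj with hm | hm
    · exact ⟨G, hG, hm.monotoneOn⟩
    · exact ⟨G.negSnd, hG, fun y hy z hz hyz ↦ neg_le_neg (hm.antitoneOn hy hz hyz)⟩
  subst hGu
  obtain ⟨p, q, hqp, -, hexp⟩ := F.exists_norm_expansion hu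
  obtain ⟨p', q', hqp', hpq', hexp'⟩ := G.exists_norm_expansion hw
  have hexp : F.NormExpansion p q := hexp
  have hexp' : G.NormExpansion p' q' := hexp'
  have hO : ∀ y ∈ I, (fun z ↦ (r z - r y, σ z - σ y)) =O[𝓝 y] fun z ↦ z - y :=
    fun y hy ↦ h.locallyLipschitzOn_right.isBigO_sub h.isOpen hy
  have hOσ : ∀ g : Y →L[ℝ] ℝ, ∀ y ∈ I, (fun z ↦ g (σ z) - g (σ y)) =O[𝓝 y] fun z ↦ z - y := by
    intro g y hy
    simp_rw [← map_sub]
    exact (g.isBigO_comp _ _).trans (isBigO_snd_prod.trans (hO y hy))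
  have hρ : ∀ y ∈ I, ρ y = (G.cu (σ y) - (r y - l y)) • G.u + G.cv (σ y) • G.v := by
    intro y hy
    have e := hdir y hy
    rw [sub_smul, ← e]
    nth_rewrite 1 [← sub_sub_cancel (σ y) (ρ y)]
    nth_rewrite 1 [← G.repr (σ y)]
    abel
  obtain ⟨κ, c, μ, c', hκ⟩ := hexp.exists_affine hexp' hqp
    (lt_of_le_of_ne hqp' fun he ↦ hwnd (hpq' he)) h.isOpen (r := r) (l := l)
    (A := fun y ↦ G.cu (σ y)) (A₂ := fun y ↦ G.cu (σ y) - (r y - l y))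
    (B := fun y ↦ G.cv (σ y)) h.lt (fun y _ ↦ by ring)
    (fun y hy ↦ isBigO_fst_prod.trans (hO y hy)) (hOσ G.cu) (hOσ G.cv) hmono (by
      intro y hy z hz
      rw [← h.norm_cross y hy z hz, hρ y hy]
      congr 1
      conv_rhs => rw [← G.repr (σ z)]
      simp only [sub_smul]
      abel)
  refine ⟨((F.cu : X →ₗ[ℝ] ℝ).smulRight G.u +
    (F.cv : X →ₗ[ℝ] ℝ).smulRight (μ • G.u + κ • G.v)).toAffineMap +
    AffineMap.const ℝ X (c' • G.u + c • G.v), fun y hy ↦ ?_⟩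
  obtain ⟨hBy, hAy⟩ := hκ y hy
  have hσ : σ y = (r y + μ * y + c') • G.u + (κ * y + c) • G.v := by
    rw [← hBy, ← hAy, G.repr]
  constructor
  · rw [hσ]
    simp [F.cu_comb, F.cv_comb]
    module
  · rw [hρ y hy, hAy, hBy]
    simp [F.cu_comb, F.cv_comb]
    module

end ChordIsometry

theorem PlaneFrame.exists_affineMap_eqOn {X Y : Type*} [NormedAddCommGroup X] [NormedSpace ℝ X]
    [NormedAddCommGroup Y] [NormedSpace ℝ Y] [StrictConvexSpace ℝ X] [StrictConvexSpace ℝ Y]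
    (F : PlaneFrame X) (hdim : Module.finrank ℝ Y = 2) (hu : ‖F.u‖ = 1)
    (hnd : ¬ DifferentiableAt ℝ (fun z : X ↦ ‖z‖) F.u)
    (hfin : {w : Y | ‖w‖ = 1 ∧ ¬ DifferentiableAt ℝ (fun z : Y ↦ ‖z‖) w}.Finite)
    {K : Set X} (hK : IsCompact K) (hconv : Convex ℝ K) (hne : (interior K).Nonempty)
    {τ : X → Y} (hiso : ∀ a ∈ frontier K, ∀ b ∈ frontier K, ‖τ a - τ b‖ = ‖a - b‖) :
    ∃ T : X →ᵃ[ℝ] Y, ∀ k ∈ interior K, ∃ a ∈ frontier K, ∃ b ∈ frontier K,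
      k ∈ segment ℝ a b ∧ T a = τ a ∧ T b = τ b := by
  set I := F.cv '' interior K with hI
  have hIconv : Convex ℝ I := hconv.interior.is_linear_image F.cv.toLinearMap.isLinear
  have hIo : IsOpen I := by
    refine F.cv.isOpenMap_of_ne_zero (fun h ↦ ?_) _ isOpen_interior
    have := F.cv_comb 0 1
    simp [h] at this
  obtain ⟨r, hrc, hrm, hrlt⟩ := F.exists_upper_boundary hK hconv
  obtain ⟨l', hlc, hlm, hllt⟩ := F.negFst.exists_upper_boundary hK hconv
  have hlm : ∀ y ∈ I, (-l' y) • F.u + y • F.v ∈ frontier K := fun y hy ↦ by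
    simpa [negFst] using hlm y hy
  have hllt : ∀ k ∈ interior K, -l' (F.cv k) < F.cu k := fun k hk ↦ by
    have := hllt k hk
    simp only [negFst, neg_apply] at this
    linarith
  have hsub : ∀ x x' y y' : ℝ, x • F.u + y • F.v - (x' • F.u + y' • F.v) =
      (x - x') • F.u + (y - y') • F.v := fun x x' y y' ↦ by module
  have hch : ChordIsometry F I r (fun y ↦ -l' y) (fun y ↦ τ (r y • F.u + y • F.v))
      (fun y ↦ τ ((-l' y) • F.u + y • F.v)) :=
    { isOpen := hIo
      ordConnected := hIconv.ordConnected
      lt := by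
        rintro _ ⟨k, hk, rfl⟩
        exact (hllt k hk).trans (hrlt k hk)
      lipschitz_right := hrc.locallyLipschitzOn hIo
      lipschitz_left := (ConcaveOn.neg hlc).locallyLipschitzOn hIo
      norm_right := fun y hy z hz ↦ by rw [hiso _ (hrm z hz) _ (hrm y hy), hsub]
      norm_left := fun y hy z hz ↦ by rw [hiso _ (hlm z hz) _ (hlm y hy), hsub]
      norm_cross := fun y hy z hz ↦ by rw [hiso _ (hrm z hz) _ (hlm y hy), hsub] }
  obtain ⟨T, hT⟩ := hch.exists_affineMap hdim (hne.image _) hu hnd hfin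
  refine ⟨T, fun k hk ↦ ?_⟩
  have hy : F.cv k ∈ I := mem_image_of_mem _ hk
  refine ⟨_, hlm _ hy, _, hrm _ hy, ?_, (hT _ hy).2, (hT _ hy).1⟩
  have hseg : F.cu k ∈ segment ℝ (-l' (F.cv k)) (r (F.cv k)) := by
    rw [segment_eq_Icc ((hllt k hk).trans (hrlt k hk)).le]
    exact ⟨(hllt k hk).le, (hrlt k hk).le⟩
  obtain ⟨s, t, hs, ht, hst, he⟩ := hseg
  refine ⟨s, t, hs, ht, hst, ?_⟩
  calc _ = (s • -l' (F.cv k) + t • r (F.cv k)) • F.u + (s + t) • F.cv k • F.v := by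
        simp only [smul_eq_mul]; module
    _ = k := by rw [he, hst, one_smul, F.repr]

theorem eqOn_frontier_of_segment {X Y : Type*} [NormedAddCommGroup X] [NormedSpace ℝ X]
    [NormedAddCommGroup Y] [NormedSpace ℝ Y] [StrictConvexSpace ℝ Y] [FiniteDimensional ℝ X]
    {K : Set X} (hK : IsCompact K) (hconv : Convex ℝ K) (hne : (interior K).Nonempty)
    {τ : X → Y} (hiso : ∀ a ∈ frontier K, ∀ b ∈ frontier K, ‖τ a - τ b‖ = ‖a - b‖)
    {T : X →ᵃ[ℝ] Y} (hT : ∀ k ∈ interior K, ∃ a ∈ frontier K, ∃ b ∈ frontier K,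
      k ∈ segment ℝ a b ∧ T a = τ a ∧ T b = τ b) : EqOn T τ (frontier K) := by
  have hdist : ∀ a ∈ frontier K, ∀ b ∈ frontier K, dist (τ a) (τ b) = dist a b := by
    simpa only [dist_eq_norm] using hiso
  have hτc : ContinuousOn τ (frontier K) :=
    (LipschitzOnWith.of_dist_le_mul (K := 1) fun a ha b hb ↦ by
      simp [hdist a ha b hb]).continuousOn
  have hTc : Continuous T := T.continuous_of_finiteDimensional
  set E := {a ∈ frontier K | T a = τ a} with hE
  have hfr : frontier K ⊆ K := hK.isClosed.frontier_subset
  have hEcl : IsClosed E := by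
    have := (hTc.continuousOn.sub hτc).preimage_isClosed_of_isClosed isClosed_frontier
      (isClosed_singleton (x := (0 : Y)))
    convert this using 1
    ext a
    simp [hE, sub_eq_zero]
  have hEc : IsCompact E := hK.of_isClosed_subset hEcl fun a ha ↦ hfr ha.1
  set φ : X × X × ℝ → X := fun x ↦ AffineMap.lineMap x.1 x.2.1 x.2.2 with hφ
  have hφc : Continuous φ := by
    simp only [hφ, AffineMap.lineMap_apply_module]
    fun_prop
  have hcomp : IsCompact (φ '' (E ×ˢ E ×ˢ Icc (0 : ℝ) 1)) :=
    (hEc.prod (hEc.prod isCompact_Icc)).image hφc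
  have hint : interior K ⊆ φ '' (E ×ˢ E ×ˢ Icc (0 : ℝ) 1) := by
    intro k hk
    obtain ⟨a, ha, b, hb, hkab, hTa, hTb⟩ := hT k hk
    rw [segment_eq_image_lineMap] at hkab
    obtain ⟨t, ht, rfl⟩ := hkab
    exact ⟨(a, b, t), ⟨⟨ha, hTa⟩, ⟨hb, hTb⟩, ht⟩, rfl⟩
  have hKsub : K ⊆ φ '' (E ×ˢ E ×ˢ Icc (0 : ℝ) 1) := by
    refine subset_closure.trans ?_
    rw [← hconv.closure_interior_eq_closure_of_nonempty_interior hne]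
    exact closure_minimal hint hcomp.isClosed
  intro m hm
  obtain ⟨⟨a, b, t⟩, ⟨⟨ha, hTa⟩, ⟨hb, hTb⟩, ht⟩, hmt⟩ := hKsub (hfr hm)
  have hmt : AffineMap.lineMap a b t = m := hmt
  simp only at ha hTa hb hTb ht
  have h1 : dist (τ a) (τ m) = t * dist (τ a) (τ b) := by
    rw [hdist a ha m hm, hdist a ha b hb, ← hmt, dist_left_lineMap, Real.norm_of_nonneg ht.1]
  have h2 : dist (τ m) (τ b) = (1 - t) * dist (τ a) (τ b) := by
    rw [hdist m hm b hb, hdist a ha b hb, ← hmt, dist_lineMap_right,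
      Real.norm_of_nonneg (sub_nonneg.2 ht.2)]
  rw [eq_lineMap_of_dist_eq_mul_of_dist_eq_mul h1 h2, ← hmt, AffineMap.apply_lineMap, hTa, hTb]

theorem norm_linear_of_frontier_isometry {X Y : Type*} [NormedAddCommGroup X] [NormedSpace ℝ X]
    [NormedAddCommGroup Y] [NormedSpace ℝ Y] {K : Set X} (hK : IsCompact K)
    (hne : (interior K).Nonempty) {T : X →ᵃ[ℝ] Y}
    (hT : ∀ a ∈ frontier K, ∀ b ∈ frontier K, ‖T a - T b‖ = ‖a - b‖) (d : X) :
    ‖T.linear d‖ = ‖d‖ := by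
  rcases eq_or_ne d 0 with rfl | hd
  · simp
  obtain ⟨k, hk⟩ := hne
  obtain ⟨s, hs, hsK⟩ := exists_pos_add_smul_mem_frontier hK hk hd
  obtain ⟨t, ht, htK⟩ := exists_pos_add_smul_mem_frontier hK hk (neg_ne_zero.2 hd)
  have h := hT _ hsK _ htK
  have e : k + s • d - (k + t • -d) = (s + t) • d := by module
  have e' : T (k + s • d) - T (k + t • -d) = (s + t) • T.linear d := by
    rw [← vsub_eq_sub, ← T.linearMap_vsub, vsub_eq_sub, e, map_smul]
  rw [e, e', norm_smul, norm_smul] at h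
  exact mul_left_cancel₀ (norm_ne_zero_iff.2 (add_pos hs ht).ne') h

end

/-- Theorem `coroultra`, Mankiewicz property for convex curves.
Let `X`, `Y` be strictly convex normed planes whose sets of non-differentiability
points of the norm on the unit sphere are finite with more than three elements each.
Let `C_X ⊆ X` be a piecewise `C¹` Jordan curve enclosing a convex region and let
`τ : C_X → C_Y` be a surjective isometry onto a piecewise `C¹` curve `C_Y ⊆ Y`.
Then `τ` is affine; in particular `X` and `Y` are linearly isometric. -/
theorem stmt14 {X Y : Type*} [NormedAddCommGroup X] [NormedSpace ℝ X]
    [NormedAddCommGroup Y] [NormedSpace ℝ Y]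
    [StrictConvexSpace ℝ X] [StrictConvexSpace ℝ Y]
    (hdimX : Module.finrank ℝ X = 2) (hdimY : Module.finrank ℝ Y = 2)
    (hNDX : {u : X | ‖u‖ = 1 ∧ ¬ DifferentiableAt ℝ (fun z : X => ‖z‖) u}.Finite)
    (hNDY : {w : Y | ‖w‖ = 1 ∧ ¬ DifferentiableAt ℝ (fun z : Y => ‖z‖) w}.Finite)
    (hcardX : 3 < {u : X | ‖u‖ = 1 ∧ ¬ DifferentiableAt ℝ (fun z : X => ‖z‖) u}.ncard)
    (hcardY : 3 < {w : Y | ‖w‖ = 1 ∧ ¬ DifferentiableAt ℝ (fun z : Y => ‖z‖) w}.ncard)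
    (CX : Set X) (CY : Set Y)
    (hCX : IsPiecewiseC1JordanCurve CX)
    (hCXconv : ∃ K : Set X, IsCompact K ∧ Convex ℝ K ∧
      (interior K).Nonempty ∧ CX = frontier K)
    (hCY : IsPiecewiseC1JordanCurve CY)
    (τ : X → Y)
    (hmap : Set.MapsTo τ CX CY) (hsurj : Set.SurjOn τ CX CY)
    (hiso : ∀ u ∈ CX, ∀ v ∈ CX, ‖τ u - τ v‖ = ‖u - v‖) :
    (∃ A : X →ᵃ[ℝ] Y, Isometry A ∧ ∀ p ∈ CX, A p = τ p) ∧
      Nonempty (X ≃ₗᵢ[ℝ] Y) := by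
  have : FiniteDimensional ℝ X := Module.finite_of_finrank_pos (hdimX ▸ two_pos)
  have : FiniteDimensional ℝ Y := Module.finite_of_finrank_pos (hdimY ▸ two_pos)
  obtain ⟨K, hK, hconv, hne, rfl⟩ := hCXconv
  obtain ⟨u, hu, hnd⟩ := Set.nonempty_of_ncard_ne_zero (by omega : Set.ncard
    {u : X | ‖u‖ = 1 ∧ ¬ DifferentiableAt ℝ (fun z : X => ‖z‖) u} ≠ 0)
  obtain ⟨F, rfl⟩ := PlaneFrame.exists_of_ne_zero hdimX (norm_pos_iff.1 (hu ▸ one_pos) : u ≠ 0)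
  obtain ⟨T, hT⟩ := F.exists_affineMap_eqOn hdimY hu hnd hNDY hK hconv hne hiso
  have hTτ := eqOn_frontier_of_segment hK hconv hne hiso hT
  have hlin := norm_linear_of_frontier_isometry hK hne (T := T) fun a ha b hb ↦ by
    rw [hTτ ha, hTτ hb, hiso a ha b hb]
  refine ⟨⟨T, Isometry.of_dist_eq fun a b ↦ ?_, hTτ⟩,
    ⟨LinearIsometry.toLinearIsometryEquiv ⟨T.linear, hlin⟩ (hdimX.trans hdimY.symm)⟩⟩
  rw [dist_eq_norm, dist_eq_norm, ← vsub_eq_sub, ← T.linearMap_vsub, vsub_eq_sub, hlin]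
end
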